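/- Let m : [0,∞) × ℝ → [0,∞) be smooth in (t,x), with m(t,·) a Schwartz function and a probability density for every t ≥ 0, and suppose m solves the Dyson equation classically: ∂ₜm(t,x) + ∂ₓ(m(t,·)H[m(t,·)])(x) = 0 for all (t,x) ∈ (0,∞) × ℝ. Then for all 0 ≤ t′ ≤ t, E(m_t) = E(m_{t′}) + ∫_{t′}^{t} ∫_ℝ H[m(s,·)](x)² m(s,x) dx ds, where E(m_s) denotes the free entropy of the probability measure with density m(s,·). In particular, s ↦ E(m_s) is non-decreasing. -/

import Mathlib

open MeasureTheory Filter Set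
open scoped ENNReal Topology

/-- Truncated (unnormalized) Hilbert transform: `∫_{|x−y|≥δ} u(y)/(x−y) dy`. -/
noncomputable def truncHilbert (u : ℝ → ℝ) (δ x : ℝ) : ℝ :=
  ∫ y in {y : ℝ | δ ≤ |x - y|}, u y / (x - y)

/-- The (unnormalized) Hilbert transform, defined as the principal value
`H[u](x) = lim_{δ→0⁺} ∫_{|x−y|≥δ} u(y)/(x−y) dy`. -/
noncomputable def hilbert (u : ℝ → ℝ) (x : ℝ) : ℝ :=
  limUnder (𝓝[>] (0 : ℝ)) (fun δ => truncHilbert u δ x)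

/-- The free entropy `E(mu) = (1/2)∫∫ log|x−y| dmu dmu`, as an extended real number:
one half of the difference between the lintegral of the positive part and the lintegral of
the negative part of `log|x−y|` with respect to the product measure. -/
noncomputable def freeEntropy (mu : Measure ℝ) : EReal :=
  ((1 / 2 : ℝ) : EReal) *
    (((∫⁻ p : ℝ × ℝ, ENNReal.ofReal (Real.log |p.1 - p.2|) ∂(mu.prod mu)) : EReal)
      - ((∫⁻ p : ℝ × ℝ, ENNReal.ofReal (-Real.log |p.1 - p.2|) ∂(mu.prod mu)) : EReal))

/-- The probability measure on `ℝ` with density `m(t,·)`. -/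
noncomputable def densMeasure (m : ℝ → ℝ → ℝ) (t : ℝ) : Measure ℝ :=
  volume.withDensity (fun x => ENNReal.ofReal (m t x))

/-!
Symmetrizing in the two space variables, the Dyson flux `m H[m]` pairs with a test function `ψ = φ'`
as `½ ∬ (ψ(x) - ψ(y)) / (x - y) m(x) m(y)`, which makes sense for every Lipschitz `ψ`. Testing the
equation against the logarithmic potential of `m_s`, with the kernel regularized at scale `ε`, shows
that the regularized energy grows at the rate `2 ∫ H_ε[m] H[m] m`, where `H_ε[m]` is the
correspondingly regularized Hilbert transform.

Letting `ε → 0` under the time integral requires a bound on `H_ε[m_s]` that is uniform in `ε` and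
`s`. Now `H_ε[m_s](x)` is the real part of the Cauchy transform `G_s` at `x + iε`, and `G` solves
the complex Burgers equation `∂ₜG + G ∂_zG = 0` in the upper half-plane. Since `Im G ≤ 0` there, the
characteristics rise when followed backwards in time and therefore stay in the half-plane, so
`sup |G_s|` never exceeds `sup |G_0|`, which is finite because `m_0` is Lipschitz and integrable.
-/

open scoped NNReal

namespace DysonFlow

section Bounds

variable {α E : Type*} [MeasurableSpace α] {μ : Measure α} [NormedAddCommGroup E] [NormedSpace ℝ E]

theorem norm_integral_smul_le {u : α → ℝ} {k : α → E} {C : ℝ} (hu : Integrable u μ)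
    (hk : ∀ x, ‖k x‖ ≤ C) : ‖∫ x, u x • k x ∂μ‖ ≤ C * ∫ x, |u x| ∂μ := by
  rw [← integral_const_mul]
  refine norm_integral_le_of_norm_le (hu.abs.const_mul C) (.of_forall fun x => ?_)
  rw [norm_smul, mul_comm]
  exact mul_le_mul_of_nonneg_right (hk x) (abs_nonneg _)

theorem norm_slope_le {ψ : ℝ → E} {K : ℝ≥0} (hψ : LipschitzWith K ψ) (x y : ℝ) :
    ‖slope ψ x y‖ ≤ K := by
  rw [slope_def_module, norm_smul, norm_inv, ← div_eq_inv_mul]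
  exact div_le_of_le_mul₀ (norm_nonneg _) K.2 (hψ.norm_sub_le y x)

end Bounds

/-- The conjugate Poisson kernel `y / (y² + ε²)`, the smooth odd regularization of `1 / y` from
which the regularized Hilbert transform is built. -/
noncomputable def regKernel (ε y : ℝ) : ℝ := y / (y ^ 2 + ε ^ 2)

/-- The Poisson kernel `ε / (y² + ε²)` of the upper half plane, without the factor `1 / π`. -/
noncomputable def poissonKernel (ε y : ℝ) : ℝ := ε / (y ^ 2 + ε ^ 2)

theorem regKernel_neg (ε y : ℝ) : regKernel ε (-y) = -regKernel ε y := by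
  simp only [regKernel, neg_sq, neg_div]

section Kernels

variable {ε : ℝ}

theorem poissonKernel_nonneg (hε : 0 < ε) (y : ℝ) : 0 ≤ poissonKernel ε y := by
  unfold poissonKernel; positivity

theorem continuous_regKernel (hε : 0 < ε) : Continuous (regKernel ε) :=
  continuous_id.div (by fun_prop) fun y => by positivity

theorem abs_regKernel_le (hε : 0 < ε) (y : ℝ) : |regKernel ε y| ≤ ε⁻¹ := by
  have h : 0 < y ^ 2 + ε ^ 2 := by positivity
  rw [regKernel, abs_div, abs_of_pos h, div_le_iff₀ h, inv_mul_eq_div, le_div_iff₀ hε]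
  nlinarith [sq_abs y, sq_nonneg (|y| - ε)]

theorem one_sub_mul_regKernel (hε : 0 < ε) (y : ℝ) :
    1 - y * regKernel ε y = ε * poissonKernel ε y := by
  have h : y ^ 2 + ε ^ 2 ≠ 0 := by positivity
  simp only [regKernel, poissonKernel]
  field_simp
  ring

theorem abs_mul_regKernel_le (ε y : ℝ) : |y * regKernel ε y| ≤ 1 := by
  rw [regKernel, ← mul_div_assoc, ← sq, abs_of_nonneg (by positivity)]
  exact div_le_one_of_le₀ (by nlinarith [sq_nonneg ε]) (by positivity)

theorem tendsto_mul_regKernel {y : ℝ} (hy : y ≠ 0) :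
    Tendsto (fun ε => y * regKernel ε y) (𝓝[>] 0) (𝓝 1) := by
  have hcont : ContinuousAt (fun ε => y * regKernel ε y) 0 :=
    continuousAt_const.mul (continuousAt_const.div (by fun_prop) (by positivity))
  have hzero : y * regKernel 0 y = 1 := by simp only [regKernel]; field_simp; simp
  exact (hzero ▸ hcont.tendsto).mono_left nhdsWithin_le_nhds

theorem hasDerivAt_regKernel (hε : 0 < ε) (y : ℝ) :
    HasDerivAt (regKernel ε) ((ε ^ 2 - y ^ 2) / (y ^ 2 + ε ^ 2) ^ 2) y := by
  have h := (hasDerivAt_id y).div ((hasDerivAt_pow 2 y).add_const (ε ^ 2)) (by positivity)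
  refine h.congr_deriv ?_
  simp only [id_eq, Nat.cast_ofNat]
  ring

theorem abs_deriv_regKernel_le (hε : 0 < ε) (y : ℝ) : |deriv (regKernel ε) y| ≤ (ε ^ 2)⁻¹ := by
  have hpos : 0 < y ^ 2 + ε ^ 2 := by positivity
  rw [(hasDerivAt_regKernel hε y).deriv, abs_div, abs_of_pos (pow_pos hpos 2)]
  calc |ε ^ 2 - y ^ 2| / (y ^ 2 + ε ^ 2) ^ 2
      ≤ (y ^ 2 + ε ^ 2) / (y ^ 2 + ε ^ 2) ^ 2 := by
        gcongr
        exact abs_le.2 ⟨by nlinarith [sq_nonneg ε], by nlinarith [sq_nonneg y]⟩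
    _ = (y ^ 2 + ε ^ 2)⁻¹ := by field_simp
    _ ≤ (ε ^ 2)⁻¹ := by gcongr; nlinarith [sq_nonneg y]

theorem poissonKernel_eq_inv_mul_inv (hε : 0 < ε) (y : ℝ) :
    poissonKernel ε y = ε⁻¹ * (1 + (y / ε) ^ 2)⁻¹ := by
  simp only [poissonKernel]
  field_simp
  ring

theorem integrable_poissonKernel (hε : 0 < ε) : Integrable (poissonKernel ε) := by
  rw [funext (poissonKernel_eq_inv_mul_inv hε)]
  exact (integrable_inv_one_add_sq.comp_div hε.ne').const_mul _

theorem integral_poissonKernel (hε : 0 < ε) : ∫ y, poissonKernel ε y = Real.pi := by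
  rw [funext (poissonKernel_eq_inv_mul_inv hε), integral_const_mul,
    Measure.integral_comp_div (fun y : ℝ => (1 + y ^ 2)⁻¹), integral_univ_inv_one_add_sq,
    abs_of_pos hε, smul_eq_mul, inv_mul_cancel_left₀ hε.ne']

end Kernels

theorem hasDerivAt_integral_mul_comp_sub {u k k' : ℝ → ℝ} {C : ℝ}
    (hk : ∀ y, HasDerivAt k (k' y) y) (hk' : ∀ y, |k' y| ≤ C) (hu : Integrable u)
    (hint : ∀ x, Integrable fun y => u y * k (x - y)) (x : ℝ) :
    HasDerivAt (fun x => ∫ y, u y * k (x - y)) (∫ y, u y * k' (x - y)) x := by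
  have hk'_meas : Measurable k' := by
    rw [← funext fun y => (hk y).deriv]; exact measurable_deriv k
  refine (hasDerivAt_integral_of_dominated_loc_of_deriv_le
    (F' := fun x y => u y * k' (x - y)) (bound := fun y => |u y| * C) univ_mem
    (.of_forall fun x => (hint x).aestronglyMeasurable) (hint x)
    (hu.aestronglyMeasurable.mul (hk'_meas.comp (by fun_prop)).aestronglyMeasurable)
    (.of_forall fun y x _ => ?_) (hu.abs.mul_const C) (.of_forall fun y x _ => ?_)).2
  · rw [Real.norm_eq_abs, abs_mul]
    gcongr
    exact hk' _
  · simpa using ((hk (x - y)).comp_sub_const x y).const_mul (u y)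

/-- The Hilbert transform with `1 / (x - y)` replaced by the conjugate Poisson kernel. -/
noncomputable def regHilbert (ε : ℝ) (u : ℝ → ℝ) (x : ℝ) : ℝ := ∫ y, u y * regKernel ε (x - y)

section RegHilbert

variable {ε : ℝ} {u v : ℝ → ℝ}

theorem integrable_mul_regKernel (hε : 0 < ε) (hu : Integrable u) (x : ℝ) :
    Integrable fun y => u y * regKernel ε (x - y) :=
  hu.mul_bdd (c := ε⁻¹)
    ((continuous_regKernel hε).comp (continuous_const.sub continuous_id)).aestronglyMeasurable
    (.of_forall fun _ => abs_regKernel_le hε _)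

theorem hasDerivAt_regHilbert (hε : 0 < ε) (hu : Integrable u) (x : ℝ) :
    HasDerivAt (regHilbert ε u) (∫ y, u y * deriv (regKernel ε) (x - y)) x :=
  hasDerivAt_integral_mul_comp_sub
    (fun y => (hasDerivAt_regKernel hε y).differentiableAt.hasDerivAt)
    (abs_deriv_regKernel_le hε) hu (integrable_mul_regKernel hε hu) x

theorem abs_regHilbert_le (hε : 0 < ε) (hu : Integrable u) (x : ℝ) :
    |regHilbert ε u x| ≤ ε⁻¹ * ∫ y, |u y| :=
  norm_integral_smul_le (k := fun y => regKernel ε (x - y)) hu fun _ => abs_regKernel_le hε _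

theorem lipschitzWith_regHilbert (hε : 0 < ε) (hu : Integrable u) :
    LipschitzWith (Real.toNNReal ((ε ^ 2)⁻¹ * ∫ y, |u y|)) (regHilbert ε u) := by
  refine lipschitzWith_of_nnnorm_deriv_le
    (fun x => (hasDerivAt_regHilbert hε hu x).differentiableAt) fun x => ?_
  rw [← norm_toNNReal, (hasDerivAt_regHilbert hε hu x).deriv]
  exact Real.toNNReal_le_toNNReal
    (norm_integral_smul_le (k := fun y => deriv (regKernel ε) (x - y)) hu
      fun _ => abs_deriv_regKernel_le hε _)

theorem regHilbert_sub (hε : 0 < ε) (hu : Integrable u) (hv : Integrable v) :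
    regHilbert ε u - regHilbert ε v = regHilbert ε (u - v) := by
  ext x
  simp only [Pi.sub_apply, regHilbert, sub_mul]
  exact (integral_sub (integrable_mul_regKernel hε hu x) (integrable_mul_regKernel hε hv x)).symm

end RegHilbert

section Hilbert

variable {f k : ℝ → ℝ} {K : ℝ≥0}

theorem abs_le_of_lipschitzWith (hf : LipschitzWith K f) (hint : Integrable f) (x : ℝ) :
    |f x| ≤ (∫ y, |f y|) + K := by
  have hle : ∀ y ∈ Icc x (x + 1), |f x| ≤ |f y| + K := fun y hy => by
    have hxy : |x - y| ≤ 1 := by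
      rw [abs_sub_comm, abs_of_nonneg (sub_nonneg.2 hy.1)]
      linarith [hy.2]
    have h := (hf.norm_sub_le x y).trans (mul_le_of_le_one_right K.2 hxy)
    rw [Real.norm_eq_abs] at h
    linarith [abs_sub_abs_le_abs_sub (f x) (f y)]
  calc |f x| = ∫ _ in x..x + 1, |f x| := by simp
    _ ≤ ∫ y in x..x + 1, (|f y| + K) :=
      intervalIntegral.integral_mono_on (by linarith) intervalIntegrable_const
        (hint.abs.intervalIntegrable.add intervalIntegrable_const) hle
    _ = (∫ y in x..x + 1, |f y|) + K := by
      rw [intervalIntegral.integral_add hint.abs.intervalIntegrable intervalIntegrable_const]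
      simp
    _ ≤ (∫ y, |f y|) + K := by
      rw [intervalIntegral.integral_of_le (by linarith)]
      refine add_le_add_left ?_ _
      exact setIntegral_le_integral hint.abs (.of_forall fun _ => abs_nonneg _)

theorem slope_sub_add (f : ℝ → ℝ) (x y : ℝ) :
    slope f (x - y) (x + y) = (f (x + y) - f (x - y)) * (2 * y)⁻¹ := by
  rw [slope_def_field, div_eq_mul_inv]
  congr 2
  ring

theorem integrable_slope_sub_add (hf : LipschitzWith K f) (hint : Integrable f) (x : ℝ) :
    Integrable fun y => slope f (x - y) (x + y) := by
  have hnear : Integrable ((Icc (-1 : ℝ) 1).indicator fun _ => (K : ℝ)) :=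
    (integrable_indicator_iff measurableSet_Icc).2 (integrableOn_const (by simp))
  have hfar : Integrable fun y => |f (x + y)| + |f (x - y)| :=
    (hint.comp_add_left x).abs.add (hint.comp_sub_left x).abs
  refine (hnear.add hfar).mono' ?_ (.of_forall fun y => ?_)
  · simp only [slope_sub_add]
    have := hf.continuous
    exact (Measurable.mul (by fun_prop) (by fun_prop)).aestronglyMeasurable
  simp only [Pi.add_apply]
  by_cases hy : y ∈ Icc (-1 : ℝ) 1
  · rw [indicator_of_mem hy]
    exact (norm_slope_le hf _ _).trans (le_add_of_nonneg_right (by positivity))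
  · have h1 : 1 < |y| := not_le.1 fun h => hy (abs_le.1 h)
    have h2 : |(2 * y)⁻¹| ≤ 1 := by
      rw [abs_inv, abs_mul, abs_two]
      exact inv_le_one_of_one_le₀ (by linarith)
    rw [indicator_of_notMem hy, zero_add, slope_sub_add, norm_mul]
    exact (mul_le_of_le_one_right (norm_nonneg _) h2).trans (norm_sub_le _ _)

theorem integral_mul_comp_sub_of_odd {C : ℝ} (hf : Integrable f) (hk : Measurable k)
    (hbound : ∀ y, |k y| ≤ C) (hodd : ∀ y, k (-y) = -k y) (x : ℝ) :
    ∫ y, f y * k (x - y) = -∫ y, slope f (x - y) (x + y) * (y * k y) := by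
  have hint : ∀ g : ℝ → ℝ, Integrable g → Integrable fun y => g y * k y := fun g hg =>
    hg.mul_bdd hk.aestronglyMeasurable (.of_forall hbound)
  have hsub : ∫ y, f y * k (x - y) = ∫ y, f (x - y) * k y := by
    rw [← integral_sub_left_eq_self (fun y => f (x - y) * k y) volume x]
    simp only [sub_sub_cancel]
  have hadd : ∫ y, f (x + y) * k y = -∫ y, f (x - y) * k y := by
    rw [← integral_neg_eq_self, ← integral_neg]
    simp only [hodd, ← sub_eq_add_neg, mul_neg]
  have hslope : ∀ y, slope f (x - y) (x + y) * (y * k y)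
      = (f (x + y) * k y - f (x - y) * k y) * 2⁻¹ := fun y => by
    rcases eq_or_ne y 0 with rfl | hy
    · simp
    · rw [slope_sub_add]
      field_simp
  simp only [hslope]
  rw [integral_mul_const, integral_sub (hint _ (hf.comp_add_left x)) (hint _ (hf.comp_sub_left x)),
    hadd, hsub]
  ring

theorem truncHilbert_eq_neg_integral_slope (hf : Integrable f) {δ : ℝ} (hδ : 0 < δ) (x : ℝ) :
    truncHilbert f δ x
      = -∫ y, slope f (x - y) (x + y) * if δ ≤ |y| then 1 else 0 := by
  have hset : MeasurableSet {y : ℝ | δ ≤ |y|} := measurableSet_le (by fun_prop) (by fun_prop)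
  let κ : ℝ → ℝ := fun y => if δ ≤ |y| then y⁻¹ else 0
  have hbound : ∀ y, |κ y| ≤ δ⁻¹ := fun y => by
    by_cases hy : δ ≤ |y|
    · simp only [κ, if_pos hy, abs_inv]
      gcongr
    · simp only [κ, if_neg hy, abs_zero]
      positivity
  have hodd : ∀ y, κ (-y) = -κ y := fun y => by
    by_cases hy : δ ≤ |y| <;> simp [κ, hy, inv_neg]
  have hmul : ∀ y, y * κ y = if δ ≤ |y| then 1 else 0 := fun y => by
    by_cases hy : δ ≤ |y|
    · simp [κ, hy, mul_inv_cancel₀ (abs_pos.1 (hδ.trans_le hy))]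
    · simp [κ, hy]
  have hκ : Measurable κ := measurable_inv.ite hset measurable_const
  simp only [← hmul]
  rw [← integral_mul_comp_sub_of_odd hf hκ hbound hodd, truncHilbert,
    ← integral_indicator (measurableSet_le (by fun_prop) (by fun_prop))]
  refine integral_congr_ae (.of_forall fun y => ?_)
  by_cases hy : δ ≤ |x - y| <;> simp [κ, indicator, hy, div_eq_mul_inv]

theorem hilbert_eq_neg_integral_slope (hf : LipschitzWith K f) (hint : Integrable f) (x : ℝ) :
    hilbert f x = -∫ y, slope f (x - y) (x + y) := by
  have hslope := integrable_slope_sub_add hf hint x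
  have hset (δ : ℝ) : MeasurableSet {y : ℝ | δ ≤ |y|} :=
    measurableSet_le (by fun_prop) (by fun_prop)
  have hlim : Tendsto (fun δ => ∫ y, slope f (x - y) (x + y) * if δ ≤ |y| then 1 else 0)
      (𝓝[>] 0) (𝓝 (∫ y, slope f (x - y) (x + y))) := by
    refine tendsto_integral_filter_of_dominated_convergence _
      (.of_forall fun δ => hslope.aestronglyMeasurable.mul
        (measurable_const.ite (hset δ) measurable_const).aestronglyMeasurable)
      (.of_forall fun δ => .of_forall fun y => ?_) hslope.norm ?_
    · rw [norm_mul]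
      refine mul_le_of_le_one_right (norm_nonneg _) ?_
      split_ifs <;> simp
    · filter_upwards [Measure.ae_ne volume (0 : ℝ)] with y hy
      refine tendsto_const_nhds.congr' ?_
      filter_upwards [nhdsWithin_le_nhds (Iio_mem_nhds (abs_pos.2 hy))] with δ hδ
      rw [if_pos (le_of_lt hδ), mul_one]
  refine (hlim.neg.congr' ?_).limUnder_eq
  filter_upwards [self_mem_nhdsWithin] with δ hδ
  exact (truncHilbert_eq_neg_integral_slope hint hδ x).symm

theorem abs_hilbert_sub_regHilbert_le (hf : LipschitzWith K f) (hint : Integrable f) {ε : ℝ}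
    (hε : 0 < ε) (x : ℝ) : |hilbert f x - regHilbert ε f x| ≤ K * Real.pi * ε := by
  have hslope := integrable_slope_sub_add hf hint x
  have hreg : Integrable fun y => slope f (x - y) (x + y) * (y * regKernel ε y) :=
    hslope.mul_bdd (continuous_id.mul (continuous_regKernel hε)).aestronglyMeasurable
      (.of_forall (abs_mul_regKernel_le ε))
  have hdiff : hilbert f x - regHilbert ε f x
      = -∫ y, poissonKernel ε y • (slope f (x - y) (x + y) * ε) := by
    rw [hilbert_eq_neg_integral_slope hf hint, regHilbert, integral_mul_comp_sub_of_odd hint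
      (continuous_regKernel hε).measurable (abs_regKernel_le hε) (regKernel_neg ε), neg_sub_neg,
      ← integral_sub hreg hslope, ← integral_neg]
    congr with y
    rw [smul_eq_mul]
    linear_combination (-slope f (x - y) (x + y)) * one_sub_mul_regKernel hε y
  have hbound : ∀ y, ‖slope f (x - y) (x + y) * ε‖ ≤ K * ε := fun y => by
    rw [norm_mul, Real.norm_of_nonneg hε.le]
    exact mul_le_mul_of_nonneg_right (norm_slope_le hf _ _) hε.le
  rw [hdiff, abs_neg]
  calc |∫ y, poissonKernel ε y • (slope f (x - y) (x + y) * ε)|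
      ≤ K * ε * ∫ y, |poissonKernel ε y| :=
        norm_integral_smul_le (integrable_poissonKernel hε) hbound
    _ = K * Real.pi * ε := by
      simp only [abs_of_nonneg (poissonKernel_nonneg hε _), integral_poissonKernel hε]
      ring

theorem tendstoUniformly_regHilbert (hf : LipschitzWith K f) (hint : Integrable f) :
    TendstoUniformly (fun ε => regHilbert ε f) (hilbert f) (𝓝[>] 0) := by
  have hlim : Tendsto (fun ε => K * Real.pi * ε) (𝓝[>] (0 : ℝ)) (𝓝 0) :=
    ((continuous_const_mul _).tendsto' 0 0 (mul_zero _)).mono_left nhdsWithin_le_nhds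
  refine Metric.tendstoUniformly_iff.2 fun η hη => ?_
  filter_upwards [self_mem_nhdsWithin, hlim.eventually_lt_const hη] with ε hε hεη x
  exact (abs_hilbert_sub_regHilbert_le hf hint hε x).trans_lt hεη

theorem continuous_hilbert (hf : LipschitzWith K f) (hint : Integrable f) :
    Continuous (hilbert f) :=
  (tendstoUniformly_regHilbert hf hint).continuous <| Eventually.frequently <| by
    filter_upwards [self_mem_nhdsWithin] with ε hε
    exact (lipschitzWith_regHilbert hε hint).continuous

theorem abs_hilbert_le (hf : LipschitzWith K f) (hint : Integrable f) (x : ℝ) :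
    |hilbert f x| ≤ (∫ y, |f y|) + K * Real.pi := by
  have h1 := abs_hilbert_sub_regHilbert_le hf hint one_pos x
  have h2 := abs_regHilbert_le one_pos hint x
  have h3 := abs_sub_abs_le_abs_sub (hilbert f x) (regHilbert 1 f x)
  rw [inv_one, one_mul] at h2
  linarith

theorem abs_regHilbert_le_of_lipschitzWith (hf : LipschitzWith K f) (hint : Integrable f) {ε : ℝ}
    (hε : 0 < ε) (x : ℝ) : |regHilbert ε f x| ≤ (∫ y, |f y|) + 2 * K * Real.pi := by
  have hmass : 0 ≤ ∫ y, |f y| := integral_nonneg fun y => abs_nonneg _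
  have hKπ : 0 ≤ K * Real.pi := by positivity
  rcases le_total 1 ε with h1 | h1
  · refine (abs_regHilbert_le hε hint x).trans ?_
    linarith [mul_le_of_le_one_left hmass (inv_le_one_of_one_le₀ h1)]
  · have h2 := abs_hilbert_sub_regHilbert_le hf hint hε x
    have h3 := abs_sub_abs_le_abs_sub (regHilbert ε f x) (hilbert f x)
    rw [abs_sub_comm] at h3
    linarith [abs_hilbert_le hf hint x, mul_le_of_le_one_right hKπ h1]

theorem hasDerivAt_regHilbert_of_differentiable {ε : ℝ} (hε : 0 < ε) (hf : Differentiable ℝ f)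
    (hint : Integrable f) (hint' : Integrable (deriv f)) (x : ℝ) :
    HasDerivAt (regHilbert ε f) (regHilbert ε (deriv f) x) x := by
  refine (hasDerivAt_regHilbert hε hint x).congr_deriv ?_
  have hkernel : ∀ y, HasDerivAt (fun y => regKernel ε (x - y)) (-deriv (regKernel ε) (x - y)) y :=
    fun y => (hasDerivAt_regKernel hε _).differentiableAt.hasDerivAt.comp_const_sub x y
  have hint_k' : Integrable fun y => f y * -deriv (regKernel ε) (x - y) :=
    hint.mul_bdd ((measurable_deriv _).comp (by fun_prop)).neg.aestronglyMeasurable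
      (.of_forall fun y => by rw [norm_neg]; exact abs_deriv_regKernel_le hε _)
  have hparts := integral_mul_deriv_eq_deriv_mul_of_integrable (fun y _ => (hf y).hasDerivAt)
    (fun y _ => hkernel y) hint_k' (integrable_mul_regKernel hε hint' x)
    (integrable_mul_regKernel hε hint x)
  simpa only [regHilbert, mul_neg, integral_neg, neg_inj] using hparts

theorem hasDerivAt_hilbert {K' : ℝ≥0} (hf : LipschitzWith K f) (hint : Integrable f)
    (hdiff : Differentiable ℝ f) (hf' : LipschitzWith K' (deriv f)) (hint' : Integrable (deriv f))
    (x : ℝ) : HasDerivAt (hilbert f) (hilbert (deriv f) x) x := by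
  refine hasDerivAt_of_tendstoUniformly (tendstoUniformly_regHilbert hf' hint') ?_
    (tendstoUniformly_regHilbert hf hint).tendsto_at x
  filter_upwards [self_mem_nhdsWithin] with ε hε
  exact hasDerivAt_regHilbert_of_differentiable hε hdiff hint hint'

end Hilbert

section Interaction

variable {E : Type*} [NormedAddCommGroup E] [NormedSpace ℝ E]

/-- The symmetrized pairing `½ ∬ u(x) u(y) (ψ(x) - ψ(y)) / (x - y) dx dy`, which for a nice density
`u` equals `∫ ψ · u · H[u]`. The integrand is taken to be `0` on the diagonal. -/
noncomputable def interaction (ψ : ℝ → E) (u : ℝ → ℝ) : E :=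
  (1 / 2 : ℝ) • ∫ p : ℝ × ℝ, (u p.1 * u p.2) • slope ψ p.1 p.2

variable {ψ χ : ℝ → E} {K L : ℝ≥0} {u v : ℝ → ℝ}

theorem integrable_smul_slope (hψ : LipschitzWith K ψ) {w : ℝ × ℝ → ℝ} (hw : Integrable w) :
    Integrable fun p => w p • slope ψ p.1 p.2 := by
  have hcont := hψ.continuous
  have hinv : Measurable fun p : ℝ × ℝ => (p.2 - p.1)⁻¹ := by fun_prop
  have hnum : Continuous fun p : ℝ × ℝ => ψ p.2 - ψ p.1 := by fun_prop
  refine hw.smul_bdd K ?_ (.of_forall fun p => norm_slope_le hψ _ _)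
  simp only [slope_def_module]
  exact (hinv.stronglyMeasurable.smul hnum.stronglyMeasurable).aestronglyMeasurable

theorem integral_prod_abs (u v : ℝ → ℝ) :
    ∫ p : ℝ × ℝ, |u p.1 * v p.2| = (∫ x, |u x|) * ∫ x, |v x| := by
  simp only [abs_mul]
  exact integral_prod_mul (fun x => |u x|) fun x => |v x|

theorem norm_integral_mul_smul_slope_le (hψ : LipschitzWith K ψ) (hu : Integrable u)
    (hv : Integrable v) :
    ‖∫ p : ℝ × ℝ, (u p.1 * v p.2) • slope ψ p.1 p.2‖ ≤ K * ((∫ x, |u x|) * ∫ x, |v x|) := by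
  rw [← integral_prod_abs]
  exact norm_integral_smul_le (hu.mul_prod hv) fun p => norm_slope_le hψ _ _

theorem norm_interaction_le (hψ : LipschitzWith K ψ) (hu : Integrable u) :
    ‖interaction ψ u‖ ≤ K / 2 * (∫ x, |u x|) ^ 2 := by
  rw [interaction, norm_smul, Real.norm_of_nonneg (by positivity)]
  linarith [norm_integral_mul_smul_slope_le hψ hu hu]

theorem norm_interaction_sub_le (hψ : LipschitzWith K ψ) (hu : Integrable u) (hv : Integrable v) :
    ‖interaction ψ u - interaction ψ v‖
      ≤ K / 2 * ((∫ x, |u x|) + ∫ x, |v x|) * ∫ x, |u x - v x| := by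
  have hsplit : interaction ψ u - interaction ψ v = (1 / 2 : ℝ) •
      ((∫ p : ℝ × ℝ, ((u - v) p.1 * u p.2) • slope ψ p.1 p.2)
        + ∫ p : ℝ × ℝ, (v p.1 * (u - v) p.2) • slope ψ p.1 p.2) := by
    rw [interaction, interaction, ← smul_sub,
      ← integral_sub (integrable_smul_slope hψ (hu.mul_prod hu))
        (integrable_smul_slope hψ (hv.mul_prod hv)),
      ← integral_add (integrable_smul_slope hψ ((hu.sub hv).mul_prod hu))
        (integrable_smul_slope hψ (hv.mul_prod (hu.sub hv)))]
    congr 2 with p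
    rw [← sub_smul, ← add_smul]
    congr 1
    simp only [Pi.sub_apply]
    ring
  have hleft := norm_integral_mul_smul_slope_le hψ (hu.sub hv) hu
  have hright := norm_integral_mul_smul_slope_le hψ hv (hu.sub hv)
  simp only [Pi.sub_apply] at hleft hright hsplit
  rw [hsplit, norm_smul, Real.norm_of_nonneg (by positivity)]
  linarith [norm_add_le (∫ p : ℝ × ℝ, ((u p.1 - v p.1) * u p.2) • slope ψ p.1 p.2)
    (∫ p : ℝ × ℝ, (v p.1 * (u p.2 - v p.2)) • slope ψ p.1 p.2)]

theorem interaction_sub (hψ : LipschitzWith K ψ) (hχ : LipschitzWith L χ) (hu : Integrable u) :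
    interaction (ψ - χ) u = interaction ψ u - interaction χ u := by
  rw [interaction, interaction, interaction, ← smul_sub,
    ← integral_sub (integrable_smul_slope hψ (hu.mul_prod hu))
      (integrable_smul_slope hχ (hu.mul_prod hu))]
  congr 2 with p
  simp only [slope_def_module, Pi.sub_apply, ← smul_sub]
  abel_nf

theorem interaction_clm_comp {F : Type*} [NormedAddCommGroup F] [NormedSpace ℝ F]
    [CompleteSpace E] [CompleteSpace F] (T : E →L[ℝ] F) (hψ : LipschitzWith K ψ)
    (hu : Integrable u) : interaction (T ∘ ψ) u = T (interaction ψ u) := by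
  rw [interaction, interaction, map_smul,
    ← T.integral_comp_comm (integrable_smul_slope hψ (hu.mul_prod hu))]
  simp only [slope_def_module, Function.comp_apply, map_smul, map_sub]

end Interaction

section Symmetrization

variable {u f ψ : ℝ → ℝ} {K L : ℝ≥0}

theorem integral_mul_regHilbert {ε : ℝ} (hε : 0 < ε) (hu : Integrable u)
    (hψu : Integrable fun x => ψ x * u x) :
    ∫ x, ψ x * u x * regHilbert ε u x = (1 / 2) * ∫ p : ℝ × ℝ,
      u p.1 * u p.2 * (slope ψ p.1 p.2 * ((p.1 - p.2) * regKernel ε (p.1 - p.2))) := by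
  set F : ℝ × ℝ → ℝ := fun p => ψ p.1 * u p.1 * u p.2 * regKernel ε (p.1 - p.2)
  have hF : Integrable F := (hψu.mul_prod hu).mul_bdd
    ((continuous_regKernel hε).comp (by fun_prop)).aestronglyMeasurable
    (.of_forall fun p => abs_regKernel_le hε _)
  have hiter : ∫ x, ψ x * u x * regHilbert ε u x = ∫ p, F p := by
    rw [Measure.volume_eq_prod, integral_prod _ hF]
    simp only [F, regHilbert, mul_assoc, integral_const_mul]
  have hF_swap : Integrable fun p : ℝ × ℝ => F p.swap := hF.swap
  have hswap : ∫ p, F p = ∫ p : ℝ × ℝ, F p.swap := (integral_prod_swap F).symm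
  have hsum : ∀ p : ℝ × ℝ, F p + F p.swap
      = u p.1 * u p.2 * (slope ψ p.1 p.2 * ((p.1 - p.2) * regKernel ε (p.1 - p.2))) := fun p => by
    simp only [F, Prod.fst_swap, Prod.snd_swap]
    rw [← neg_sub p.1 p.2, regKernel_neg, slope_comm, slope_def_field]
    rcases eq_or_ne p.1 p.2 with h | h
    · simp [h]
    · have := sub_ne_zero.2 h
      field_simp
      ring
  simp only [← hsum]
  rw [integral_add hF hF_swap, ← hswap, hiter]
  ring

theorem ae_fst_ne_snd : ∀ᵐ p : ℝ × ℝ, p.1 ≠ p.2 := by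
  rw [Measure.volume_eq_prod, Measure.ae_prod_iff_ae_ae]
  · exact .of_forall fun x => (Measure.ae_ne volume x).mono fun y hy => hy.symm
  · exact (measurableSet_eq_fun measurable_fst measurable_snd).compl

theorem tendsto_integral_mul_regHilbert (hψ : LipschitzWith L ψ) (hu : Integrable u)
    (hψu : Integrable fun x => ψ x * u x) :
    Tendsto (fun ε => ∫ x, ψ x * u x * regHilbert ε u x) (𝓝[>] 0) (𝓝 (interaction ψ u)) := by
  have hint : Integrable fun p : ℝ × ℝ => u p.1 * u p.2 * slope ψ p.1 p.2 :=
    integrable_smul_slope hψ (hu.mul_prod hu)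
  have hlim : Tendsto (fun ε => ∫ p : ℝ × ℝ,
      u p.1 * u p.2 * slope ψ p.1 p.2 * ((p.1 - p.2) * regKernel ε (p.1 - p.2)))
      (𝓝[>] 0) (𝓝 (∫ p : ℝ × ℝ, u p.1 * u p.2 * slope ψ p.1 p.2)) := by
    refine tendsto_integral_filter_of_dominated_convergence _ ?_
      (.of_forall fun ε => .of_forall fun p => ?_) hint.norm ?_
    · filter_upwards [self_mem_nhdsWithin] with ε hε
      have := continuous_regKernel hε
      exact hint.aestronglyMeasurable.mul (by fun_prop : Continuous _).aestronglyMeasurable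
    · rw [norm_mul]
      exact mul_le_of_le_one_right (norm_nonneg _) (abs_mul_regKernel_le _ _)
    · filter_upwards [ae_fst_ne_snd] with p hp
      simpa using (tendsto_mul_regKernel (sub_ne_zero.2 hp)).const_mul
        (u p.1 * u p.2 * slope ψ p.1 p.2)
  refine (hlim.const_mul (1 / 2)).congr' ?_
  filter_upwards [self_mem_nhdsWithin] with ε hε
  rw [integral_mul_regHilbert hε hu hψu]
  simp only [mul_assoc]

theorem integral_mul_hilbert (hf : LipschitzWith K f) (hint : Integrable f)
    (hψ : LipschitzWith L ψ) (hψf : Integrable fun x => ψ x * f x) :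
    ∫ x, ψ x * f x * hilbert f x = interaction ψ f := by
  refine tendsto_nhds_unique (tendsto_integral_filter_of_dominated_convergence
    (fun x => ‖ψ x * f x‖ * ((∫ y, |f y|) + 2 * K * Real.pi)) ?_ ?_ (hψf.norm.mul_const _)
    (.of_forall fun x => ((tendstoUniformly_regHilbert hf hint).tendsto_at x).const_mul _))
    (tendsto_integral_mul_regHilbert hψ hint hψf)
  · filter_upwards [self_mem_nhdsWithin] with ε hε
    exact hψf.aestronglyMeasurable.mul
      (lipschitzWith_regHilbert hε hint).continuous.aestronglyMeasurable
  · filter_upwards [self_mem_nhdsWithin] with ε hε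
    refine .of_forall fun x => ?_
    rw [norm_mul]
    exact mul_le_mul_of_nonneg_left (abs_regHilbert_le_of_lipschitzWith hf hint hε x)
      (norm_nonneg _)

theorem integral_mul_deriv_mul_hilbert {K' : ℝ≥0} {φ : ℝ → ℝ} (hf : LipschitzWith K f)
    (hint : Integrable f) (hdiff : Differentiable ℝ f) (hf' : LipschitzWith K' (deriv f))
    (hint' : Integrable (deriv f)) (hφ : HasCompactSupport φ) (hφψ : ∀ x, HasDerivAt φ (ψ x) x)
    (hψ : LipschitzWith L ψ) :
    ∫ x, φ x * deriv (fun y => f y * hilbert f y) x = -interaction ψ f := by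
  have hψ_supp : HasCompactSupport ψ := by
    rw [← funext fun x => (hφψ x).deriv]; exact hφ.deriv
  have hφ_cont : Continuous φ := continuous_iff_continuousAt.2 fun x => (hφψ x).continuousAt
  have hf_cont := hf.continuous
  have hflux : ∀ x, HasDerivAt (fun y => f y * hilbert f y)
      (deriv f x * hilbert f x + f x * hilbert (deriv f) x) x := fun x =>
    (hdiff x).hasDerivAt.mul (hasDerivAt_hilbert hf hint hdiff hf' hint' x)
  have hflux_cont := hf_cont.mul (continuous_hilbert hf hint)
  have hflux'_cont := (hf'.continuous.mul (continuous_hilbert hf hint)).add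
    (hf_cont.mul (continuous_hilbert hf' hint'))
  have hψf : Integrable fun x => ψ x * f x :=
    (hψ.continuous.mul hf_cont).integrable_of_hasCompactSupport hψ_supp.mul_right
  rw [← integral_mul_hilbert hf hint hψ hψf, funext fun x => (hflux x).deriv,
    integral_mul_deriv_eq_deriv_mul_of_integrable (fun x _ => hφψ x) (fun x _ => hflux x)
      ((hφ_cont.mul hflux'_cont).integrable_of_hasCompactSupport hφ.mul_right)
      ((hψ.continuous.mul hflux_cont).integrable_of_hasCompactSupport hψ_supp.mul_right)
      ((hφ_cont.mul hflux_cont).integrable_of_hasCompactSupport hφ.mul_right)]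
  simp only [mul_assoc]

end Symmetrization

section Cutoff

theorem lipschitzWith_of_hasDerivAt_of_norm_le {E : Type*} [NormedAddCommGroup E] [NormedSpace ℝ E]
    {φ ψ : ℝ → E} {B : ℝ≥0} (hφψ : ∀ x, HasDerivAt φ (ψ x) x) (hψ : ∀ x, ‖ψ x‖ ≤ B) :
    LipschitzWith B φ :=
  lipschitzWith_of_nnnorm_deriv_le (fun x => (hφψ x).differentiableAt)
    fun x => by rw [(hφψ x).deriv]; exact hψ x

theorem lipschitzWith_mul_of_norm_le {α : Type*} [PseudoMetricSpace α] {f g : α → ℝ}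
    {A B K L : ℝ≥0} (hf : LipschitzWith K f) (hg : LipschitzWith L g) (hfA : ∀ x, ‖f x‖ ≤ A)
    (hgB : ∀ x, ‖g x‖ ≤ B) : LipschitzWith (A * L + K * B) fun x => f x * g x := by
  refine LipschitzWith.of_dist_le_mul fun x y => ?_
  calc dist (f x * g x) (f y * g y) = ‖f x * (g x - g y) + (f x - f y) * g y‖ := by
        rw [dist_eq_norm]
        ring_nf
    _ ≤ ‖f x‖ * ‖g x - g y‖ + ‖f x - f y‖ * ‖g y‖ := by
        rw [← norm_mul, ← norm_mul]
        exact norm_add_le _ _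
    _ ≤ A * (L * dist x y) + K * dist x y * B := by
        gcongr
        · exact hfA x
        · exact (dist_eq_norm (g x) (g y)).symm.trans_le (hg.dist_le_mul x y)
        · exact (dist_eq_norm (f x) (f y)).symm.trans_le (hf.dist_le_mul x y)
        · exact hgB y
    _ = ↑(A * L + K * B) * dist x y := by
        push_cast
        ring

theorem exists_smooth_cutoff_id : ∃ (τ τ' : ℝ → ℝ) (K : ℝ≥0), HasCompactSupport τ ∧
    (∀ x, HasDerivAt τ (τ' x) x) ∧ (∀ x, ‖τ' x‖ ≤ K) ∧ LipschitzWith K τ' ∧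
    (∀ x, |τ x| ≤ |x|) ∧ ∀ x, |x| ≤ 1 → τ x = x := by
  let χ : ContDiffBump (0 : ℝ) := ⟨1, 2, one_pos, one_lt_two⟩
  have hτ : ContDiff ℝ 2 fun x => x * χ x := contDiff_id.mul χ.contDiff
  have hsupp : HasCompactSupport fun x => x * χ x := χ.hasCompactSupport.mul_left
  obtain ⟨K₀, hK₀⟩ := ContDiff.lipschitzWith_of_hasCompactSupport hsupp hτ two_ne_zero
  obtain ⟨K₁, hK₁⟩ := ContDiff.lipschitzWith_of_hasCompactSupport hsupp.deriv
    (hτ.iterate_deriv' 1 1) one_ne_zero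
  refine ⟨_, _, max K₀ K₁, hsupp, fun x => (hτ.differentiable two_ne_zero x).hasDerivAt,
    fun x => ?_, hK₁.weaken (le_max_right _ _), fun x => ?_, fun x hx => ?_⟩
  · exact (norm_deriv_le_of_lipschitz hK₀).trans (by exact_mod_cast le_max_left K₀ K₁)
  · rw [abs_mul, abs_of_nonneg χ.nonneg]
    exact mul_le_of_le_one_right (abs_nonneg x) χ.le_one
  · rw [χ.one_of_mem_closedBall (by simpa using hx), mul_one]

theorem exists_truncation : ∃ (T T' : ℕ → ℝ → ℝ) (K : ℝ≥0), (∀ n, HasCompactSupport (T n)) ∧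
    (∀ n x, HasDerivAt (T n) (T' n x) x) ∧ (∀ n x, ‖T' n x‖ ≤ K) ∧ (∀ n, LipschitzWith K (T' n)) ∧
    (∀ n x, |T n x| ≤ |x|) ∧ ∀ (n : ℕ) (x : ℝ), |x| ≤ n + 1 → T n x = x := by
  obtain ⟨τ, τ', K, hsupp, hττ', hτ'K, hτ', hτ_le, hτ_id⟩ := exists_smooth_cutoff_id
  let c : ℕ → ℝ := fun n => n + 1
  have hc : ∀ n, 0 < c n := fun n => by positivity
  have hscale : ∀ n x, |(c n)⁻¹ * x| = (c n)⁻¹ * |x| := fun n x => by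
    rw [abs_mul, abs_inv, abs_of_pos (hc n)]
  have hscale_lip : ∀ n, LipschitzWith 1 fun x : ℝ => (c n)⁻¹ * x := fun n =>
    lipschitzWith_of_hasDerivAt_of_norm_le (fun x => (hasDerivAt_id x).const_mul _) fun _ => by
      rw [mul_one, norm_inv, Real.norm_of_nonneg (hc n).le]
      exact inv_le_one_of_one_le₀ (by simp [c])
  refine ⟨fun n x => c n * τ ((c n)⁻¹ * x), fun n x => τ' ((c n)⁻¹ * x), K,
    fun n => (hsupp.comp_smul (inv_ne_zero (hc n).ne')).mul_left, fun n x => ?_,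
    fun _ _ => hτ'K _, fun n => mul_one K ▸ hτ'.comp (hscale_lip n), fun n x => ?_,
    fun n x hx => ?_⟩
  · refine (((hττ' _).comp x ((hasDerivAt_id x).const_mul (c n)⁻¹)).const_mul (c n)).congr_deriv ?_
    have := (hc n).ne'
    field_simp
    rfl
  · calc |c n * τ ((c n)⁻¹ * x)| ≤ c n * |(c n)⁻¹ * x| := by
          rw [abs_mul, abs_of_pos (hc n)]
          exact mul_le_mul_of_nonneg_left (hτ_le _) (hc n).le
      _ = |x| := by rw [hscale, mul_inv_cancel_left₀ (hc n).ne']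
  · have hx' : |(c n)⁻¹ * x| ≤ 1 := by rwa [hscale, inv_mul_le_one₀ (hc n)]
    simp only [hτ_id _ hx', mul_inv_cancel_left₀ (hc n).ne']

theorem exists_hasCompactSupport_approx {φ ψ : ℝ → ℝ} {B L : ℝ≥0}
    (hφψ : ∀ x, HasDerivAt φ (ψ x) x) (hψB : ∀ x, ‖ψ x‖ ≤ B) (hψ : LipschitzWith L ψ) :
    ∃ (φn ψn : ℕ → ℝ → ℝ) (K : ℝ≥0), (∀ n, HasCompactSupport (φn n)) ∧
      (∀ n x, HasDerivAt (φn n) (ψn n x) x) ∧ (∀ n, LipschitzWith K (ψn n)) ∧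
      (∀ n x, |φn n x| ≤ B * |x|) ∧
      ∀ x, ∀ᶠ n in atTop, φn n x = φ x - φ 0 ∧ ψn n x = ψ x := by
  obtain ⟨T, T', K, hsupp, hTT', hT'K, hT', hT_le, hT_id⟩ := exists_truncation
  have hφ_T : ∀ n x, HasDerivAt (fun x => φ (T n x) - φ 0) (ψ (T n x) * T' n x) x :=
    fun n x => ((hφψ _).comp x (hTT' n x)).sub_const _
  refine ⟨fun n x => φ (T n x) - φ 0, fun n x => ψ (T n x) * T' n x, B * K + L * K * K,
    fun n => (hsupp n).comp_left (g := fun y => φ y - φ 0) (sub_self _), hφ_T, fun n => ?_,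
    fun n x => ?_, fun x => ?_⟩
  · exact lipschitzWith_mul_of_norm_le
      (hψ.comp (lipschitzWith_of_hasDerivAt_of_norm_le (hTT' n) (hT'K n))) (hT' n)
      (fun _ => hψB _) (hT'K n)
  · have hφ := (lipschitzWith_of_hasDerivAt_of_norm_le hφψ hψB).norm_sub_le (T n x) 0
    rw [sub_zero] at hφ
    exact hφ.trans (mul_le_mul_of_nonneg_left (hT_le n x) B.2)
  · obtain ⟨N, hN⟩ := exists_nat_gt |x|
    filter_upwards [eventually_ge_atTop N] with n hn
    have hx : |x| < n + 1 := hN.trans_le (by exact_mod_cast hn.trans n.le_succ)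
    have hev : (fun x => φ (T n x) - φ 0) =ᶠ[𝓝 x] fun x => φ x - φ 0 := by
      filter_upwards [continuous_abs.continuousAt.eventually_lt_const hx] with y hy
      rw [hT_id n y hy.le]
    exact ⟨hev.eq_of_nhds, ((hφ_T n x).congr_of_eventuallyEq hev.symm).unique
      ((hφψ x).sub_const _)⟩

end Cutoff

section WeakSolution

theorem integrable_smul_of_norm_le_add_mul_abs {E : Type*} [NormedAddCommGroup E]
    [NormedSpace ℝ E] {u : ℝ → ℝ} {φ : ℝ → E} {A B : ℝ} (hu : Integrable u)
    (hu₁ : Integrable fun x => x * u x) (hφ : Continuous φ) (hle : ∀ x, ‖φ x‖ ≤ A + B * |x|) :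
    Integrable fun x => u x • φ x := by
  refine ((hu.abs.const_mul A).add (hu₁.abs.const_mul B)).mono'
    (hu.aestronglyMeasurable.smul hφ.aestronglyMeasurable) (.of_forall fun x => ?_)
  calc ‖u x • φ x‖ = |u x| * ‖φ x‖ := norm_smul _ _
    _ ≤ |u x| * (A + B * |x|) := mul_le_mul_of_nonneg_left (hle x) (abs_nonneg _)
    _ = A * |u x| + B * |x * u x| := by
      rw [abs_mul]
      ring

theorem tendsto_interaction {E : Type*} [NormedAddCommGroup E] [NormedSpace ℝ E] {L : ℝ≥0}
    {ψn : ℕ → ℝ → E} {ψ : ℝ → E} {u : ℝ → ℝ} (hψn : ∀ n, LipschitzWith L (ψn n))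
    (hlim : ∀ x, Tendsto (fun n => ψn n x) atTop (𝓝 (ψ x))) (hu : Integrable u) :
    Tendsto (fun n => interaction (ψn n) u) atTop (𝓝 (interaction ψ u)) := by
  have hint := hu.mul_prod hu
  refine (tendsto_integral_of_dominated_convergence (fun p => ‖u p.1 * u p.2‖ * L)
    (fun n => (integrable_smul_slope (hψn n) hint).aestronglyMeasurable)
    (hint.norm.mul_const _) (fun n => .of_forall fun p => ?_)
    (.of_forall fun p => ?_)).const_smul _
  · rw [norm_smul]
    exact mul_le_mul_of_nonneg_left (norm_slope_le (hψn n) _ _) (norm_nonneg _)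
  · exact (((hlim p.2).sub (hlim p.1)).const_smul _).const_smul _

/-- A family of probability densities with finite first moment which is continuous in time as a
map to `L¹`. -/
structure IsDensityFlow (ρ : ℝ → ℝ → ℝ) : Prop where
  nonneg : ∀ t x, 0 ≤ ρ t x
  integral_eq_one : ∀ t, ∫ x, ρ t x = 1
  integrable_id_mul : ∀ t, Integrable fun x => x * ρ t x
  tendsto_integral_abs_sub : ∀ t, Tendsto (fun s => ∫ x, |ρ s x - ρ t x|) (𝓝 t) (𝓝 0)

/-- A flow of densities which solves the Dyson equation `∂ₜρ + ∂ₓ(ρ H[ρ]) = 0` weakly for times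
`t ≥ 0`. The flux is expressed through the symmetrized pairing `interaction`, so no regularity of
the densities is needed. -/
structure IsWeakSolution (ρ : ℝ → ℝ → ℝ) : Prop extends IsDensityFlow ρ where
  weak_form : ∀ ⦃φ ψ : ℝ → ℝ⦄ ⦃K : ℝ≥0⦄, HasCompactSupport φ → (∀ x, HasDerivAt φ (ψ x) x) →
    LipschitzWith K ψ → ∀ ⦃a b : ℝ⦄, 0 ≤ a → 0 ≤ b →
      (∫ x, ρ b x * φ x) - (∫ x, ρ a x * φ x) = ∫ s in a..b, interaction ψ (ρ s)

namespace IsDensityFlow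

variable {ρ : ℝ → ℝ → ℝ} {E : Type*} [NormedAddCommGroup E] [NormedSpace ℝ E] {K : ℝ≥0}

theorem integrable (hρ : IsDensityFlow ρ) (t : ℝ) : Integrable (ρ t) :=
  .of_integral_ne_zero (by rw [hρ.integral_eq_one]; exact one_ne_zero)

theorem integral_abs (hρ : IsDensityFlow ρ) (t : ℝ) : ∫ x, |ρ t x| = 1 := by
  simp only [abs_of_nonneg (hρ.nonneg t _), hρ.integral_eq_one]

theorem integrable_smul (hρ : IsDensityFlow ρ) {φ : ℝ → E} (hφ : LipschitzWith K φ) (t : ℝ) :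
    Integrable fun x => ρ t x • φ x :=
  integrable_smul_of_norm_le_add_mul_abs (A := ‖φ 0‖) (B := K) (hρ.integrable t)
    (hρ.integrable_id_mul t) hφ.continuous fun x => by
      have h := hφ.norm_sub_le x 0
      rw [sub_zero, Real.norm_eq_abs] at h
      linarith [norm_le_norm_add_norm_sub' (φ x) (φ 0)]

theorem continuous_integral_smul (hρ : IsDensityFlow ρ) {φ : ℝ → E} {C : ℝ} (hφ : Continuous φ)
    (hφC : ∀ x, ‖φ x‖ ≤ C) : Continuous fun t => ∫ x, ρ t x • φ x := by
  have hint : ∀ t, Integrable fun x => ρ t x • φ x := fun t =>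
    (hρ.integrable t).smul_bdd C hφ.aestronglyMeasurable (.of_forall hφC)
  refine continuous_iff_continuousAt.2 fun t => tendsto_iff_norm_sub_tendsto_zero.2 ?_
  refine squeeze_zero (fun _ => norm_nonneg _) (fun s => ?_)
    (by simpa using (hρ.tendsto_integral_abs_sub t).const_mul C)
  rw [← integral_sub (hint s) (hint t)]
  simp only [← sub_smul]
  exact norm_integral_smul_le ((hρ.integrable s).sub (hρ.integrable t)) hφC

theorem norm_interaction_le (hρ : IsDensityFlow ρ) {ψ : ℝ → E} (hψ : LipschitzWith K ψ)
    (t : ℝ) : ‖interaction ψ (ρ t)‖ ≤ K / 2 := by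
  simpa only [hρ.integral_abs, one_pow, mul_one] using
    DysonFlow.norm_interaction_le hψ (hρ.integrable t)

theorem norm_interaction_sub_le (hρ : IsDensityFlow ρ) {ψ : ℝ → E} (hψ : LipschitzWith K ψ)
    (s t : ℝ) :
    ‖interaction ψ (ρ s) - interaction ψ (ρ t)‖ ≤ K * ∫ x, |ρ s x - ρ t x| := by
  have h := DysonFlow.norm_interaction_sub_le hψ (hρ.integrable s) (hρ.integrable t)
  rw [hρ.integral_abs, hρ.integral_abs] at h
  linarith

theorem continuous_interaction (hρ : IsDensityFlow ρ) {ψ : ℝ → E} (hψ : LipschitzWith K ψ) :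
    Continuous fun s => interaction ψ (ρ s) := by
  refine continuous_iff_continuousAt.2 fun t => tendsto_iff_dist_tendsto_zero.2 ?_
  refine squeeze_zero (fun _ => dist_nonneg) (fun s => ?_)
    (by simpa using (hρ.tendsto_integral_abs_sub t).const_mul (K : ℝ))
  rw [dist_eq_norm]
  exact hρ.norm_interaction_sub_le hψ s t

end IsDensityFlow

namespace IsWeakSolution

variable {ρ : ℝ → ℝ → ℝ} {E : Type*} [NormedAddCommGroup E] [NormedSpace ℝ E] {K : ℝ≥0}

theorem weak_form_of_bounded_deriv (hρ : IsWeakSolution ρ) {φ ψ : ℝ → ℝ} {B : ℝ≥0}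
    (hφψ : ∀ x, HasDerivAt φ (ψ x) x) (hψB : ∀ x, ‖ψ x‖ ≤ B) (hψ : LipschitzWith K ψ)
    {a b : ℝ} (ha : 0 ≤ a) (hb : 0 ≤ b) :
    (∫ x, ρ b x * φ x) - (∫ x, ρ a x * φ x) = ∫ s in a..b, interaction ψ (ρ s) := by
  have hφ : LipschitzWith B φ := lipschitzWith_of_hasDerivAt_of_norm_le hφψ hψB
  obtain ⟨φn, ψn, L, hsupp, hφψn, hψn, hle, hlim⟩ := exists_hasCompactSupport_approx hφψ hψB hψ
  have hcont : ∀ n, Continuous (φn n) := fun n =>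
    continuous_iff_continuousAt.2 fun x => (hφψn n x).continuousAt
  have htest : ∀ t, Tendsto (fun n => ∫ x, ρ t x * φn n x) atTop
      (𝓝 ((∫ x, ρ t x * φ x) - φ 0)) := fun t => by
    have hcenter : (∫ x, ρ t x * φ x) - φ 0 = ∫ x, ρ t x * (φ x - φ 0) := by
      simp only [mul_sub]
      rw [integral_sub (by exact hρ.integrable_smul hφ t) ((hρ.integrable t).mul_const _),
        integral_mul_const, hρ.integral_eq_one, one_mul]
    rw [hcenter]
    refine tendsto_integral_of_dominated_convergence (fun x => B * ‖x * ρ t x‖)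
      (fun n => (hρ.integrable t).aestronglyMeasurable.mul (hcont n).aestronglyMeasurable)
      ((hρ.integrable_id_mul t).norm.const_mul _) (fun n => .of_forall fun x => ?_)
      (.of_forall fun x => tendsto_nhds_of_eventually_eq ?_)
    · rw [norm_mul, norm_mul, ← mul_assoc, mul_comm]
      exact mul_le_mul_of_nonneg_right (hle n x) (norm_nonneg _)
    · filter_upwards [hlim x] with n hn
      rw [hn.1]
  have hrhs : Tendsto (fun n => ∫ s in a..b, interaction (ψn n) (ρ s)) atTop
      (𝓝 (∫ s in a..b, interaction ψ (ρ s))) :=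
    intervalIntegral.tendsto_integral_filter_of_dominated_convergence (fun _ => (L : ℝ) / 2)
      (.of_forall fun n => (hρ.continuous_interaction (hψn n)).aestronglyMeasurable)
      (.of_forall fun n => .of_forall fun s _ => hρ.norm_interaction_le (hψn n) s)
      intervalIntegrable_const (.of_forall fun s _ =>
        tendsto_interaction hψn (fun x => tendsto_nhds_of_eventually_eq
          ((hlim x).mono fun _ h => h.2)) (hρ.integrable s))
  have hlhs := (htest b).sub (htest a)
  rw [sub_sub_sub_cancel_right] at hlhs
  refine tendsto_nhds_unique hlhs (hrhs.congr fun n => ?_)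
  exact (hρ.weak_form (hsupp n) (hφψn n) (hψn n) ha hb).symm

theorem integral_smul_sub_integral_smul [CompleteSpace E] (hρ : IsWeakSolution ρ) {φ ψ : ℝ → E}
    {B : ℝ≥0} (hφψ : ∀ x, HasDerivAt φ (ψ x) x) (hψB : ∀ x, ‖ψ x‖ ≤ B) (hψ : LipschitzWith K ψ)
    {a b : ℝ} (ha : 0 ≤ a) (hb : 0 ≤ b) :
    (∫ x, ρ b x • φ x) - (∫ x, ρ a x • φ x) = ∫ s in a..b, interaction ψ (ρ s) := by
  have hφ : LipschitzWith B φ := lipschitzWith_of_hasDerivAt_of_norm_le hφψ hψB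
  refine (SeparatingDual.eq_iff_forall_dual_eq (R := ℝ)).2 fun T => ?_
  have hreal := hρ.weak_form_of_bounded_deriv (φ := T ∘ φ) (ψ := T ∘ ψ) (B := ‖T‖₊ * B)
    (fun x => T.hasFDerivAt.comp_hasDerivAt x (hφψ x))
    (fun x => (T.le_opNorm _).trans (mul_le_mul_of_nonneg_left (hψB x) (norm_nonneg _)))
    (T.lipschitz.comp hψ) ha hb
  rw [map_sub, ← T.integral_comp_comm (hρ.integrable_smul hφ b),
    ← T.integral_comp_comm (hρ.integrable_smul hφ a), ← T.intervalIntegral_comp_comm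
      ((hρ.continuous_interaction hψ).intervalIntegrable a b)]
  simp only [map_smul, ← interaction_clm_comp T hψ (hρ.integrable _)]
  exact hreal

end IsWeakSolution

end WeakSolution

section Resolvent

variable {z : ℂ}

theorem sub_ofReal_ne_zero (hz : 0 < z.im) (x : ℝ) : z - x ≠ 0 := fun h =>
  hz.ne' (by simpa using congrArg Complex.im h)

theorem norm_inv_sub_ofReal_le (hz : 0 < z.im) (x : ℝ) : ‖(z - x)⁻¹‖ ≤ z.im⁻¹ := by
  rw [norm_inv]
  refine inv_anti₀ hz ?_
  simpa [abs_of_pos hz] using Complex.abs_im_le_norm (z - x)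

theorem hasDerivAt_inv_sub_ofReal (hz : 0 < z.im) (x : ℝ) :
    HasDerivAt (fun x : ℝ => (z - x)⁻¹) ((z - x)⁻¹ ^ 2) x := by
  refine (((Complex.ofRealCLM.hasDerivAt (x := x)).const_sub z).fun_inv
    (sub_ofReal_ne_zero hz x)).congr_deriv ?_
  simp [inv_pow]

theorem lipschitzWith_inv_sub_ofReal_sq (hz : 0 < z.im) :
    LipschitzWith (Real.toNNReal (2 * z.im⁻¹ ^ 3)) fun x : ℝ => (z - x)⁻¹ ^ 2 := by
  refine lipschitzWith_of_hasDerivAt_of_norm_le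
    (fun x => (hasDerivAt_inv_sub_ofReal hz x).fun_pow 2) fun x => ?_
  rw [Real.coe_toNNReal _ (by positivity)]
  calc ‖((2 : ℕ) : ℂ) * (z - x)⁻¹ ^ (2 - 1) * (z - x)⁻¹ ^ 2‖ = 2 * ‖(z - x)⁻¹‖ ^ 3 := by
        simp only [norm_mul, norm_pow, Nat.cast_ofNat, Complex.norm_ofNat]
        ring
    _ ≤ 2 * z.im⁻¹ ^ 3 := by
        gcongr
        exact norm_inv_sub_ofReal_le hz x

theorem norm_inv_add_mul_inv_sq_sub_inv_le (hz : 0 < z.im) {d : ℂ} (hd : d.im ≤ 0) (x : ℝ) :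
    ‖(z - x)⁻¹ + d * (z - x)⁻¹ ^ 2 - (z - d - x)⁻¹‖ ≤ ‖d‖ ^ 2 * z.im⁻¹ ^ 3 := by
  have hzd : z.im ≤ (z - d).im := by simpa using hd
  have hx := sub_ofReal_ne_zero hz x
  have hxd := sub_ofReal_ne_zero (hz.trans_le hzd) x
  have hid : (z - x)⁻¹ + d * (z - x)⁻¹ ^ 2 - (z - d - x)⁻¹
      = -(d ^ 2 * ((z - x)⁻¹ ^ 2 * (z - d - x)⁻¹)) := by
    field_simp
    ring
  rw [hid, norm_neg, norm_mul, norm_mul, norm_pow, norm_pow, pow_succ z.im⁻¹]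
  gcongr
  · exact norm_inv_sub_ofReal_le hz x
  · exact (norm_inv_sub_ofReal_le (hz.trans_le hzd) x).trans (inv_anti₀ hz hzd)

theorem re_inv_sub_ofReal (x : ℝ) : (z - x)⁻¹.re = regKernel z.im (z.re - x) := by
  simp [regKernel, Complex.inv_re, Complex.normSq_apply, sq]

theorem im_inv_sub_ofReal (x : ℝ) : (z - x)⁻¹.im = -poissonKernel z.im (z.re - x) := by
  simp [poissonKernel, Complex.inv_im, Complex.normSq_apply, sq, neg_div]

end Resolvent

section Cauchy

/-- The Cauchy type integral `∫ u(x) (z - x)⁻ⁿ dx` in the upper half plane; `n = 1` is the Cauchy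
transform of `u` and `n = 2` is minus its derivative. -/
noncomputable def cauchyPow (n : ℕ) (u : ℝ → ℝ) (z : ℂ) : ℂ := ∫ x, u x • (z - x)⁻¹ ^ n

variable {z : ℂ} {u : ℝ → ℝ}

theorem norm_inv_sub_ofReal_pow_le (hz : 0 < z.im) (n : ℕ) (x : ℝ) :
    ‖(z - x)⁻¹ ^ n‖ ≤ z.im⁻¹ ^ n := by
  rw [norm_pow]
  gcongr
  exact norm_inv_sub_ofReal_le hz x

theorem continuous_inv_sub_ofReal_pow (hz : 0 < z.im) (n : ℕ) :
    Continuous fun x : ℝ => (z - x)⁻¹ ^ n :=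
  ((continuous_const.sub Complex.continuous_ofReal).inv₀ (sub_ofReal_ne_zero hz)).pow n

theorem integrable_smul_inv_sub_ofReal_pow (hz : 0 < z.im) (n : ℕ) (hu : Integrable u) :
    Integrable fun x => u x • (z - x)⁻¹ ^ n :=
  hu.smul_bdd _ (continuous_inv_sub_ofReal_pow hz n).aestronglyMeasurable
    (.of_forall (norm_inv_sub_ofReal_pow_le hz n))

theorem norm_cauchyPow_le (hz : 0 < z.im) (n : ℕ) (hu : Integrable u) :
    ‖cauchyPow n u z‖ ≤ z.im⁻¹ ^ n * ∫ x, |u x| :=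
  norm_integral_smul_le hu (norm_inv_sub_ofReal_pow_le hz n)

theorem re_cauchyPow_one (hz : 0 < z.im) (hu : Integrable u) :
    (cauchyPow 1 u z).re = regHilbert z.im u z.re := by
  refine (Complex.reCLM.integral_comp_comm (integrable_smul_inv_sub_ofReal_pow hz 1 hu)).symm.trans
    (integral_congr_ae (.of_forall fun x => ?_))
  simp [-Complex.inv_re, re_inv_sub_ofReal]

theorem im_cauchyPow_one (hz : 0 < z.im) (hu : Integrable u) :
    (cauchyPow 1 u z).im = -∫ x, u x * poissonKernel z.im (z.re - x) := by
  refine (Complex.imCLM.integral_comp_comm (integrable_smul_inv_sub_ofReal_pow hz 1 hu)).symm.trans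
    ((integral_congr_ae (.of_forall fun x => ?_)).trans (integral_neg _))
  simp [-Complex.inv_im, im_inv_sub_ofReal]

theorem im_cauchyPow_one_nonpos (hz : 0 < z.im) (hu : Integrable u) (hu0 : ∀ x, 0 ≤ u x) :
    (cauchyPow 1 u z).im ≤ 0 := by
  rw [im_cauchyPow_one hz hu, neg_nonpos]
  exact integral_nonneg fun x => mul_nonneg (hu0 x) (poissonKernel_nonneg hz _)

theorem norm_cauchyPow_one_le_of_lipschitzWith {K : ℝ≥0} {M : ℝ} (hz : 0 < z.im)
    (hu : Integrable u) (hK : LipschitzWith K u) (hM : ∀ x, |u x| ≤ M) :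
    ‖cauchyPow 1 u z‖ ≤ (∫ x, |u x|) + 2 * K * Real.pi + M * Real.pi := by
  refine (Complex.norm_le_abs_re_add_abs_im _).trans (add_le_add ?_ ?_)
  · rw [re_cauchyPow_one hz hu]
    exact abs_regHilbert_le_of_lipschitzWith hK hu hz _
  · have hpois := (integrable_poissonKernel hz).comp_sub_left z.re
    rw [im_cauchyPow_one hz hu, abs_neg, ← Real.norm_eq_abs, ← integral_poissonKernel hz,
      ← integral_sub_left_eq_self (μ := volume) (poissonKernel z.im) z.re, ← integral_const_mul]
    refine norm_integral_le_of_norm_le (hpois.const_mul M) (.of_forall fun x => ?_)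
    rw [norm_mul, Real.norm_of_nonneg (poissonKernel_nonneg hz _)]
    exact mul_le_mul_of_nonneg_right (hM x) (poissonKernel_nonneg hz _)

theorem norm_cauchyPow_taylor_le (hz : 0 < z.im) {d : ℂ} (hd : d.im ≤ 0) (hu : Integrable u) :
    ‖cauchyPow 1 u z + d * cauchyPow 2 u z - cauchyPow 1 u (z - d)‖
      ≤ ‖d‖ ^ 2 * z.im⁻¹ ^ 3 * ∫ x, |u x| := by
  have hzd : 0 < (z - d).im := by
    rw [Complex.sub_im]
    linarith
  have h1 := integrable_smul_inv_sub_ofReal_pow hz 1 hu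
  have h2 := (integrable_smul_inv_sub_ofReal_pow hz 2 hu).const_mul d
  have h3 := integrable_smul_inv_sub_ofReal_pow hzd 1 hu
  rw [cauchyPow, cauchyPow, cauchyPow, ← integral_const_mul, ← integral_add h1 h2,
    ← integral_sub (by exact h1.add h2) h3]
  simp only [pow_one, mul_smul_comm, ← smul_add, ← smul_sub]
  exact norm_integral_smul_le hu (norm_inv_add_mul_inv_sq_sub_inv_le hz hd)

theorem slope_inv_sub_ofReal_sq (hz : 0 < z.im) {x y : ℝ} (hxy : x ≠ y) :
    slope (fun x : ℝ => (z - x)⁻¹ ^ 2) x y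
      = (z - x)⁻¹ ^ 1 * (z - y)⁻¹ ^ 2 + (z - x)⁻¹ ^ 2 * (z - y)⁻¹ ^ 1 := by
  have hx := sub_ofReal_ne_zero hz x
  have hy := sub_ofReal_ne_zero hz y
  have hne : (y : ℂ) - x ≠ 0 := by exact_mod_cast sub_ne_zero.2 hxy.symm
  rw [slope_def_module, Complex.real_smul]
  push_cast
  field_simp
  ring

theorem interaction_inv_sub_ofReal_sq (hz : 0 < z.im) (hu : Integrable u) :
    interaction (fun x : ℝ => (z - x)⁻¹ ^ 2) u = cauchyPow 1 u z * cauchyPow 2 u z := by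
  have h1 := integrable_smul_inv_sub_ofReal_pow hz 1 hu
  have h2 := integrable_smul_inv_sub_ofReal_pow hz 2 hu
  have hprod : ∀ᵐ p : ℝ × ℝ, (u p.1 * u p.2) • slope (fun x : ℝ => (z - x)⁻¹ ^ 2) p.1 p.2
      = u p.1 • (z - p.1)⁻¹ ^ 1 * u p.2 • (z - p.2)⁻¹ ^ 2
        + u p.1 • (z - p.1)⁻¹ ^ 2 * u p.2 • (z - p.2)⁻¹ ^ 1 := by
    filter_upwards [ae_fst_ne_snd] with p hp
    rw [slope_inv_sub_ofReal_sq hz hp, smul_mul_smul_comm, smul_mul_smul_comm, ← smul_add]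
  rw [interaction, integral_congr_ae hprod, Measure.volume_eq_prod,
    integral_add (h1.mul_prod h2) (h2.mul_prod h1),
    integral_prod_mul (fun x : ℝ => u x • (z - x)⁻¹ ^ 1) fun x : ℝ => u x • (z - x)⁻¹ ^ 2,
    integral_prod_mul (fun x : ℝ => u x • (z - x)⁻¹ ^ 2) fun x : ℝ => u x • (z - x)⁻¹ ^ 1]
  change (1 / 2 : ℝ) • (cauchyPow 1 u z * cauchyPow 2 u z + cauchyPow 2 u z * cauchyPow 1 u z) = _
  rw [Complex.real_smul]
  push_cast
  ring

end Cauchy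

theorem IsDensityFlow.continuous_cauchyPow {ρ : ℝ → ℝ → ℝ} {z : ℂ} (hρ : IsDensityFlow ρ)
    (hz : 0 < z.im) (n : ℕ) : Continuous fun t => cauchyPow n (ρ t) z :=
  hρ.continuous_integral_smul (continuous_inv_sub_ofReal_pow hz n)
    (norm_inv_sub_ofReal_pow_le hz n)

namespace IsWeakSolution

variable {ρ : ℝ → ℝ → ℝ} {z : ℂ}

-- The time-integrated complex Burgers equation `∂ₜG + G ∂_z G = 0`, as `cauchyPow 2 = -∂_z G`.
theorem cauchyPow_one_sub (hρ : IsWeakSolution ρ) (hz : 0 < z.im) {a b : ℝ} (ha : 0 ≤ a)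
    (hb : 0 ≤ b) : cauchyPow 1 (ρ b) z - cauchyPow 1 (ρ a) z
      = ∫ s in a..b, interaction (fun x : ℝ => (z - x)⁻¹ ^ 2) (ρ s) := by
  simp only [cauchyPow, pow_one]
  exact hρ.integral_smul_sub_integral_smul (B := Real.toNNReal (z.im⁻¹ ^ 2))
    (hasDerivAt_inv_sub_ofReal hz)
    (fun x => (norm_inv_sub_ofReal_pow_le hz 2 x).trans (Real.le_coe_toNNReal _))
    (lipschitzWith_inv_sub_ofReal_sq hz) ha hb

theorem norm_cauchyPow_sub_euler_le (hρ : IsWeakSolution ρ) (hz : 0 < z.im) {t t' η : ℝ}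
    (ht : 0 ≤ t) (htt' : t ≤ t') (hη : ∀ s ∈ Icc t t', ∫ x, |ρ s x - ρ t x| ≤ η) :
    ‖cauchyPow 1 (ρ t') z - (cauchyPow 1 (ρ t) z
      + ((t' - t : ℝ) * cauchyPow 1 (ρ t) z) * cauchyPow 2 (ρ t) z)‖
      ≤ 2 * z.im⁻¹ ^ 3 * η * (t' - t) := by
  have hlip := lipschitzWith_inv_sub_ofReal_sq hz
  set ψ : ℝ → ℂ := fun x => (z - x)⁻¹ ^ 2
  have hremainder : cauchyPow 1 (ρ t') z - (cauchyPow 1 (ρ t) z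
      + ((t' - t : ℝ) * cauchyPow 1 (ρ t) z) * cauchyPow 2 (ρ t) z)
      = ∫ s in t..t', (interaction ψ (ρ s) - interaction ψ (ρ t)) := by
    rw [intervalIntegral.integral_sub ((hρ.continuous_interaction hlip).intervalIntegrable _ _)
      intervalIntegrable_const, ← hρ.cauchyPow_one_sub hz ht (ht.trans htt'),
      intervalIntegral.integral_const, interaction_inv_sub_ofReal_sq hz (hρ.integrable t),
      Complex.real_smul]
    ring
  rw [hremainder, ← abs_of_nonneg (sub_nonneg.2 htt')]
  refine intervalIntegral.norm_integral_le_of_norm_le_const fun s hs => ?_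
  rw [uIoc_of_le htt'] at hs
  refine (hρ.norm_interaction_sub_le hlip s t).trans ?_
  rw [Real.coe_toNNReal _ (by positivity)]
  gcongr
  exact hη s ⟨hs.1.le, hs.2⟩

-- The characteristic of the Burgers equation through `z` starts from `z - (t' - t) G`, which lies
-- higher in the upper half plane because `Im G ≤ 0`.
theorem exists_norm_cauchyPow_le_add (hρ : IsWeakSolution ρ) (hz : 0 < z.im) {t t' η : ℝ}
    (ht : 0 ≤ t) (htt' : t ≤ t') (hη : ∀ s ∈ Icc t t', ∫ x, |ρ s x - ρ t x| ≤ η) :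
    ∃ w : ℂ, z.im ≤ w.im ∧ ‖cauchyPow 1 (ρ t') z‖ ≤ ‖cauchyPow 1 (ρ t) w‖
      + (2 * z.im⁻¹ ^ 3 * η + (t' - t) * z.im⁻¹ ^ 5) * (t' - t) := by
  have hG_im := im_cauchyPow_one_nonpos hz (hρ.integrable t) (hρ.nonneg t)
  have hG_norm := norm_cauchyPow_le hz 1 (hρ.integrable t)
  have heuler := hρ.norm_cauchyPow_sub_euler_le hz ht htt' hη
  rw [hρ.integral_abs, mul_one, pow_one] at hG_norm
  set G := cauchyPow 1 (ρ t) z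
  have hh : 0 ≤ t' - t := sub_nonneg.2 htt'
  have hd : (((t' - t : ℝ) : ℂ) * G).im ≤ 0 := by
    rw [Complex.im_ofReal_mul]
    exact mul_nonpos_of_nonneg_of_nonpos hh hG_im
  have htaylor := norm_cauchyPow_taylor_le hz hd (hρ.integrable t)
  have hd_norm : ‖((t' - t : ℝ) : ℂ) * G‖ ^ 2 * z.im⁻¹ ^ 3 * ∫ x, |ρ t x|
      ≤ (t' - t) * z.im⁻¹ ^ 5 * (t' - t) := by
    rw [hρ.integral_abs, norm_mul, Complex.norm_real, Real.norm_of_nonneg hh]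
    calc ((t' - t) * ‖G‖) ^ 2 * z.im⁻¹ ^ 3 * 1 ≤ ((t' - t) * z.im⁻¹) ^ 2 * z.im⁻¹ ^ 3 * 1 := by
          gcongr
      _ = (t' - t) * z.im⁻¹ ^ 5 * (t' - t) := by ring
  refine ⟨z - (t' - t : ℝ) * G, by rw [Complex.sub_im]; linarith, ?_⟩
  linarith [norm_le_norm_add_norm_sub' (cauchyPow 1 (ρ t') z)
      (G + (t' - t : ℝ) * G * cauchyPow 2 (ρ t) z),
    norm_le_norm_add_norm_sub' (G + (t' - t : ℝ) * G * cauchyPow 2 (ρ t) z)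
      (cauchyPow 1 (ρ t) (z - (t' - t : ℝ) * G))]

theorem eventually_norm_cauchyPow_le (hρ : IsWeakSolution ρ) {ε η t : ℝ} (hε : 0 < ε)
    (hη : 0 < η) (ht : 0 ≤ t) : ∀ᶠ t' in 𝓝[>] t, ∀ z : ℂ, ε ≤ z.im →
      ∃ w : ℂ, ε ≤ w.im ∧ ‖cauchyPow 1 (ρ t') z‖ ≤ ‖cauchyPow 1 (ρ t) w‖ + η * (t' - t) := by
  have hsmall : ∀ᶠ κ in 𝓝[>] (0 : ℝ), 2 * ε⁻¹ ^ 3 * κ + κ * ε⁻¹ ^ 5 < η :=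
    nhdsWithin_le_nhds ((show ContinuousAt _ _ by fun_prop).eventually_lt_const (by simpa using hη))
  obtain ⟨κ, hκη, hκ⟩ := (hsmall.and self_mem_nhdsWithin).exists
  obtain ⟨δ, hδ, hball⟩ := Metric.eventually_nhds_iff.1
    ((hρ.tendsto_integral_abs_sub t).eventually_lt_const hκ)
  filter_upwards [Ioo_mem_nhdsGT (lt_add_of_pos_right t (lt_min hδ hκ))] with t' ht' z hz
  have hlt : t' - t < min δ κ := sub_lt_iff_lt_add'.2 ht'.2
  obtain ⟨w, hzw, hw⟩ := hρ.exists_norm_cauchyPow_le_add (hε.trans_le hz) ht ht'.1.le (η := κ)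
    fun s hs => (hball (by
      rw [Real.dist_eq, abs_of_nonneg (sub_nonneg.2 hs.1)]
      linarith [hs.2, hlt.trans_le (min_le_left δ κ)])).le
  refine ⟨w, hz.trans hzw, hw.trans ?_⟩
  have hinv : z.im⁻¹ ≤ ε⁻¹ := inv_anti₀ hε hz
  have hinv0 : 0 ≤ z.im⁻¹ := inv_nonneg.2 (hε.le.trans hz)
  have hh : 0 ≤ t' - t := sub_nonneg.2 ht'.1.le
  have hhκ : t' - t ≤ κ := (hlt.trans_le (min_le_right δ κ)).le
  gcongr
  refine le_trans ?_ hκη.le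
  gcongr

theorem norm_cauchyPow_one_le_add_mul (hρ : IsWeakSolution ρ) {M ε η t : ℝ} (hε : 0 < ε)
    (hη : 0 < η) (hM : ∀ z : ℂ, 0 < z.im → ‖cauchyPow 1 (ρ 0) z‖ ≤ M) (ht : 0 ≤ t)
    (hz : ε ≤ z.im) : ‖cauchyPow 1 (ρ t) z‖ ≤ M + η * t := by
  let S : Set ℝ := ⋂ w : {w : ℂ // ε ≤ w.im}, {s | ‖cauchyPow 1 (ρ s) w‖ ≤ M + η * s}
  have hS : IsClosed S := isClosed_iInter fun w =>
    isClosed_le (hρ.continuous_cauchyPow (hε.trans_le w.2) 1).norm (by fun_prop)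
  have h0 : (0 : ℝ) ∈ S := mem_iInter.2 fun w => by simpa using hM w (hε.trans_le w.2)
  suffices hsub : Icc 0 t ⊆ S from mem_iInter.1 (hsub ⟨ht, le_rfl⟩) ⟨z, hz⟩
  refine (hS.inter isClosed_Icc).Icc_subset_of_forall_mem_nhdsWithin h0 fun s hs => ?_
  filter_upwards [hρ.eventually_norm_cauchyPow_le hε hη hs.2.1] with s' hs'
  refine mem_iInter.2 fun z => ?_
  obtain ⟨w, hw, hle⟩ := hs' z z.2
  have hprev : ‖cauchyPow 1 (ρ s) w‖ ≤ M + η * s := mem_iInter.1 hs.1 ⟨w, hw⟩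
  rw [mem_ofPred_eq]
  linarith

theorem norm_cauchyPow_one_le (hρ : IsWeakSolution ρ) {M t : ℝ}
    (hM : ∀ z : ℂ, 0 < z.im → ‖cauchyPow 1 (ρ 0) z‖ ≤ M) (ht : 0 ≤ t) (hz : 0 < z.im) :
    ‖cauchyPow 1 (ρ t) z‖ ≤ M := by
  have hlim : Tendsto (fun η : ℝ => M + η * t) (𝓝[>] 0) (𝓝 M) := by
    have h : Tendsto (fun η : ℝ => M + η * t) (𝓝 0) (𝓝 (M + 0 * t)) :=
      Continuous.tendsto (by fun_prop) 0
    rw [zero_mul, add_zero] at h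
    exact h.mono_left nhdsWithin_le_nhds
  refine ge_of_tendsto hlim ?_
  filter_upwards [self_mem_nhdsWithin] with η hη
  exact hρ.norm_cauchyPow_one_le_add_mul hz hη hM ht le_rfl

theorem abs_regHilbert_le (hρ : IsWeakSolution ρ) {M ε t : ℝ}
    (hM : ∀ z : ℂ, 0 < z.im → ‖cauchyPow 1 (ρ 0) z‖ ≤ M) (hε : 0 < ε) (ht : 0 ≤ t) (x : ℝ) :
    |regHilbert ε (ρ t) x| ≤ M := by
  have hz : 0 < (⟨x, ε⟩ : ℂ).im := hε
  rw [show regHilbert ε (ρ t) x = _ from (re_cauchyPow_one hz (hρ.integrable t)).symm]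
  exact (Complex.abs_re_le_norm _).trans (hρ.norm_cauchyPow_one_le hM ht hz)

theorem exists_abs_regHilbert_le (hρ : IsWeakSolution ρ) {K : ℝ≥0} (hK : LipschitzWith K (ρ 0)) :
    ∃ M, ∀ ε, 0 < ε → ∀ t, 0 ≤ t → ∀ x, |regHilbert ε (ρ t) x| ≤ M :=
  have h0 := hρ.integrable 0
  ⟨_, fun _ hε _ ht => hρ.abs_regHilbert_le (fun _ hz => norm_cauchyPow_one_le_of_lipschitzWith hz
    h0 hK (abs_le_of_lipschitzWith hK h0)) hε ht⟩

end IsWeakSolution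

section LogEnergy

variable {ε : ℝ} {u v : ℝ → ℝ}

/-- The regularization `½ log (r² + ε²)` of `log |r|`, to which it reduces for `ε = 0`. -/
noncomputable def logKernel (ε r : ℝ) : ℝ := 1 / 2 * Real.log (r ^ 2 + ε ^ 2)

/-- The logarithmic potential of the density `u`, regularized at scale `ε`; its derivative is
`regHilbert ε u`. -/
noncomputable def logPotential (ε : ℝ) (u : ℝ → ℝ) (x : ℝ) : ℝ := ∫ y, u y * logKernel ε (x - y)

/-- The mutual logarithmic energy of the densities `u` and `v`, regularized at scale `ε`; the free
entropy of a density `u` is `logEnergy 0 u u / 2`. -/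
noncomputable def logEnergy (ε : ℝ) (u v : ℝ → ℝ) : ℝ :=
  ∫ p : ℝ × ℝ, u p.1 * v p.2 * logKernel ε (p.1 - p.2)

theorem logKernel_zero (r : ℝ) : logKernel 0 r = Real.log r := by
  rw [logKernel, zero_pow two_ne_zero, add_zero, Real.log_pow]
  ring

theorem logKernel_neg (ε r : ℝ) : logKernel ε (-r) = logKernel ε r := by
  simp only [logKernel, neg_sq]

theorem hasDerivAt_logKernel (hε : 0 < ε) (r : ℝ) :
    HasDerivAt (logKernel ε) (regKernel ε r) r := by
  have h := (((hasDerivAt_pow 2 r).add_const (ε ^ 2)).log (by positivity)).const_mul (1 / 2)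
  refine h.congr_deriv ?_
  simp only [regKernel]
  ring

theorem continuous_logKernel (hε : 0 < ε) : Continuous (logKernel ε) :=
  continuous_iff_continuousAt.2 fun r => (hasDerivAt_logKernel hε r).continuousAt

theorem abs_logKernel_le (hε : 0 < ε) (r : ℝ) :
    |logKernel ε r| ≤ |logKernel ε 0| + ε⁻¹ * |r| := by
  have hlip : LipschitzWith (Real.toNNReal ε⁻¹) (logKernel ε) :=
    lipschitzWith_of_hasDerivAt_of_norm_le (hasDerivAt_logKernel hε)
      fun r => (abs_regKernel_le hε r).trans (Real.le_coe_toNNReal _)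
  have h := hlip.norm_sub_le r 0
  rw [Real.coe_toNNReal _ (inv_nonneg.2 hε.le), sub_zero] at h
  simp only [Real.norm_eq_abs] at h
  linarith [abs_sub_abs_le_abs_sub (logKernel ε r) (logKernel ε 0)]

theorem hasDerivAt_logPotential (hε : 0 < ε) (hu : Integrable u)
    (hu₁ : Integrable fun x => x * u x) (x : ℝ) :
    HasDerivAt (logPotential ε u) (regHilbert ε u x) x := by
  refine hasDerivAt_integral_mul_comp_sub (hasDerivAt_logKernel hε) (abs_regKernel_le hε) hu
    (fun x => ?_) x
  refine integrable_smul_of_norm_le_add_mul_abs (A := |logKernel ε 0| + ε⁻¹ * |x|) (B := ε⁻¹) hu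
    hu₁ ((continuous_logKernel hε).comp (by fun_prop)) fun y => (abs_logKernel_le hε _).trans ?_
  have hxy : ε⁻¹ * |x - y| ≤ ε⁻¹ * (|x| + |y|) :=
    mul_le_mul_of_nonneg_left (abs_sub x y) (inv_nonneg.2 hε.le)
  linarith

theorem integrable_prod_mul_of_abs_le_add_mul_abs {k : ℝ → ℝ} {A B : ℝ} (hk : Measurable k)
    (hB : 0 ≤ B) (hle : ∀ r, |k r| ≤ A + B * |r|) (hu : Integrable u)
    (hu₁ : Integrable fun x => x * u x) (hv : Integrable v) (hv₁ : Integrable fun x => x * v x) :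
    Integrable fun p : ℝ × ℝ => u p.1 * v p.2 * k (p.1 - p.2) := by
  refine ((((hu.mul_prod hv).abs.const_mul A).add ((hu₁.mul_prod hv).abs.const_mul B)).add
    ((hu.mul_prod hv₁).abs.const_mul B)).mono' ((hu.mul_prod hv).aestronglyMeasurable.mul
      (hk.comp (by fun_prop)).aestronglyMeasurable) (.of_forall fun p => ?_)
  calc ‖u p.1 * v p.2 * k (p.1 - p.2)‖ = |u p.1| * |v p.2| * |k (p.1 - p.2)| := by
        simp only [Real.norm_eq_abs, abs_mul]
    _ ≤ |u p.1| * |v p.2| * (A + B * (|p.1| + |p.2|)) := by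
        gcongr
        refine (hle _).trans ?_
        gcongr
        exact abs_sub _ _
    _ = A * |u p.1 * v p.2| + B * |p.1 * u p.1 * v p.2| + B * |u p.1 * (p.2 * v p.2)| := by
        simp only [abs_mul]
        ring

theorem integral_mul_logPotential (hε : 0 < ε) (hu : Integrable u)
    (hu₁ : Integrable fun x => x * u x) (hv : Integrable v) (hv₁ : Integrable fun x => x * v x) :
    ∫ x, u x * logPotential ε v x = logEnergy ε u v := by
  rw [logEnergy, Measure.volume_eq_prod, integral_prod _ (integrable_prod_mul_of_abs_le_add_mul_abs
    (continuous_logKernel hε).measurable (inv_nonneg.2 hε.le) (abs_logKernel_le hε) hu hu₁ hv hv₁)]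
  simp only [mul_assoc, integral_const_mul, logPotential]

theorem logEnergy_comm (ε : ℝ) (u v : ℝ → ℝ) : logEnergy ε u v = logEnergy ε v u := by
  rw [logEnergy, Measure.volume_eq_prod, ← integral_prod_swap]
  refine integral_congr_ae (.of_forall fun p => ?_)
  simp only [Prod.fst_swap, Prod.snd_swap]
  rw [← logKernel_neg, neg_sub, mul_comm (u p.2)]

end LogEnergy

section Calculus

variable {E : Type*} [NormedAddCommGroup E] [NormedSpace ℝ E] [CompleteSpace E]

theorem hasDerivWithinAt_of_sub_eq_integral {e : ℝ → E} {k : ℝ → ℝ → E} {s : Set ℝ} {t : ℝ}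
    (hk : Continuous (Function.uncurry k)) (he : ∀ t' ∈ s, e t' - e t = ∫ r in t..t', k t' r) :
    HasDerivWithinAt e (k t t) s t := by
  rw [hasDerivWithinAt_iff_isLittleO, Asymptotics.isLittleO_iff]
  intro c hc
  obtain ⟨δ, hδ, hball⟩ := Metric.continuousAt_iff.1 (hk.continuousAt (x := (t, t))) c hc
  filter_upwards [self_mem_nhdsWithin, mem_nhdsWithin_of_mem_nhds (Metric.ball_mem_nhds t hδ)]
    with t' ht's ht'
  have hint : IntervalIntegrable (fun r => k t' r) volume t t' :=
    (hk.comp (by fun_prop : Continuous fun r => (t', r))).intervalIntegrable _ _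
  have hsub : e t' - e t - (t' - t) • k t t = ∫ r in t..t', (k t' r - k t t) := by
    rw [he t' ht's, intervalIntegral.integral_sub hint intervalIntegrable_const,
      intervalIntegral.integral_const]
  rw [hsub, Real.norm_eq_abs]
  refine intervalIntegral.norm_integral_le_of_norm_le_const fun r hr => ?_
  have hr' : dist r t ≤ dist t' t := by
    simpa only [Real.dist_eq] using abs_sub_left_of_mem_uIcc (uIoc_subset_uIcc hr)
  rw [← dist_eq_norm]
  exact (hball (x := (t', r)) (max_lt (Metric.mem_ball.1 ht') (hr'.trans_lt ht'))).le

end Calculus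

namespace IsDensityFlow

variable {ρ : ℝ → ℝ → ℝ} {ε : ℝ}

theorem norm_regHilbert_le (hρ : IsDensityFlow ρ) (hε : 0 < ε) (t x : ℝ) :
    ‖regHilbert ε (ρ t) x‖ ≤ ε⁻¹ := by
  have h := DysonFlow.abs_regHilbert_le hε (hρ.integrable t) x
  rwa [hρ.integral_abs, mul_one] at h

theorem lipschitzWith_regHilbert (hρ : IsDensityFlow ρ) (hε : 0 < ε) (t : ℝ) :
    LipschitzWith (Real.toNNReal (ε ^ 2)⁻¹) (regHilbert ε (ρ t)) := by
  have h := DysonFlow.lipschitzWith_regHilbert hε (hρ.integrable t)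
  rwa [hρ.integral_abs, mul_one] at h

theorem norm_interaction_regHilbert_sub_le (hρ : IsDensityFlow ρ) (hε : 0 < ε) (a b s : ℝ) :
    ‖interaction (regHilbert ε (ρ a)) (ρ s) - interaction (regHilbert ε (ρ b)) (ρ s)‖
      ≤ (ε ^ 2)⁻¹ * ∫ x, |ρ a x - ρ b x| := by
  have hab := (hρ.integrable a).sub (hρ.integrable b)
  have hle := hρ.norm_interaction_le (DysonFlow.lipschitzWith_regHilbert hε hab) s
  rw [Real.coe_toNNReal _ (by positivity)] at hle
  rw [← interaction_sub (hρ.lipschitzWith_regHilbert hε a) (hρ.lipschitzWith_regHilbert hε b)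
    (hρ.integrable s), regHilbert_sub hε (hρ.integrable a) (hρ.integrable b)]
  exact hle.trans (half_le_self (by positivity))

theorem continuous_uncurry_interaction_regHilbert (hρ : IsDensityFlow ρ) (hε : 0 < ε) :
    Continuous (Function.uncurry fun t s => interaction (regHilbert ε (ρ t)) (ρ s)) := by
  refine continuous_iff_continuousAt.2 fun ⟨t, s⟩ => tendsto_iff_norm_sub_tendsto_zero.2 ?_
  have hfst := (hρ.tendsto_integral_abs_sub t).comp (continuous_fst.tendsto (t, s))
  have hsnd := (hρ.tendsto_integral_abs_sub s).comp (continuous_snd.tendsto (t, s))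
  refine squeeze_zero (fun _ => norm_nonneg _) (fun ⟨t', s'⟩ => ?_)
    (by simpa using (hfst.const_mul (ε ^ 2)⁻¹).add (hsnd.const_mul (ε ^ 2)⁻¹))
  have ht := hρ.norm_interaction_regHilbert_sub_le hε t' t s'
  have hs := hρ.norm_interaction_sub_le (hρ.lipschitzWith_regHilbert hε t) s' s
  rw [Real.coe_toNNReal _ (by positivity)] at hs
  exact (norm_sub_le_norm_sub_add_norm_sub _ _ _).trans (add_le_add ht hs)

end IsDensityFlow

namespace IsWeakSolution

variable {ρ : ℝ → ℝ → ℝ} {ε : ℝ}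

theorem logEnergy_sub_eq_integral_add (hρ : IsWeakSolution ρ) (hε : 0 < ε) {a b : ℝ} (ha : 0 ≤ a)
    (hb : 0 ≤ b) : logEnergy ε (ρ b) (ρ b) - logEnergy ε (ρ a) (ρ a) = ∫ s in a..b,
      (interaction (regHilbert ε (ρ a)) (ρ s) + interaction (regHilbert ε (ρ b)) (ρ s)) := by
  have hweak : ∀ t, logEnergy ε (ρ b) (ρ t) - logEnergy ε (ρ a) (ρ t)
      = ∫ s in a..b, interaction (regHilbert ε (ρ t)) (ρ s) := fun t => by
    rw [← hρ.weak_form_of_bounded_deriv (B := Real.toNNReal ε⁻¹)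
      (hasDerivAt_logPotential hε (hρ.integrable t) (hρ.integrable_id_mul t))
      (fun x => (hρ.norm_regHilbert_le hε t x).trans (Real.le_coe_toNNReal _))
      (hρ.lipschitzWith_regHilbert hε t) ha hb]
    simp only [integral_mul_logPotential hε (hρ.integrable _) (hρ.integrable_id_mul _)
      (hρ.integrable _) (hρ.integrable_id_mul _)]
  have hcont : ∀ t, Continuous fun s => interaction (regHilbert ε (ρ t)) (ρ s) := fun t =>
    hρ.continuous_interaction (hρ.lipschitzWith_regHilbert hε t)
  rw [intervalIntegral.integral_add ((hcont a).intervalIntegrable _ _)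
    ((hcont b).intervalIntegrable _ _), ← hweak, ← hweak, logEnergy_comm ε (ρ b) (ρ a)]
  ring

theorem logEnergy_sub_eq_two_mul_integral (hρ : IsWeakSolution ρ) (hε : 0 < ε) {a b : ℝ}
    (ha : 0 ≤ a) (hb : 0 ≤ b) : logEnergy ε (ρ b) (ρ b) - logEnergy ε (ρ a) (ρ a)
      = 2 * ∫ s in a..b, interaction (regHilbert ε (ρ s)) (ρ s) := by
  have hk := hρ.continuous_uncurry_interaction_regHilbert hε
  have hderiv : ∀ t, 0 ≤ t → HasDerivWithinAt (fun s => logEnergy ε (ρ s) (ρ s))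
      (2 * interaction (regHilbert ε (ρ t)) (ρ t)) (Ici 0) t := fun t ht => by
    rw [two_mul]
    exact hasDerivWithinAt_of_sub_eq_integral (k := fun t' s =>
      interaction (regHilbert ε (ρ t)) (ρ s) + interaction (regHilbert ε (ρ t')) (ρ s))
      ((hk.comp (by fun_prop : Continuous fun p : ℝ × ℝ => (t, p.2))).add hk)
      fun t' ht' => hρ.logEnergy_sub_eq_integral_add hε ht ht'
  have hdiag : Continuous fun s => interaction (regHilbert ε (ρ s)) (ρ s) :=
    hk.comp (by fun_prop : Continuous fun s : ℝ => (s, s))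
  rw [← intervalIntegral.integral_const_mul]
  symm
  have hsub : ∀ t ∈ Ici (min a b), 0 ≤ t := fun t ht => (le_min ha hb).trans ht
  exact intervalIntegral.integral_eq_sub_of_hasDeriv_right
    (fun t ht => (hderiv t (hsub t ht.1)).continuousWithinAt.mono fun r hr => hsub r hr.1)
    (fun t ht => (hderiv t (hsub t ht.1.le)).mono fun r hr => (hsub t ht.1.le).trans hr.le)
    ((hdiag.const_mul 2).intervalIntegrable _ _)

end IsWeakSolution

section FreeEntropy

variable {ε r C : ℝ} {u v k : ℝ → ℝ}

theorem tendsto_logKernel (hr : r ≠ 0) :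
    Tendsto (fun ε => logKernel ε r) (𝓝[>] 0) (𝓝 (logKernel 0 r)) := by
  have hr' : r ^ 2 + 0 ^ 2 ≠ 0 := by positivity
  have hcont : ContinuousAt (fun ε => logKernel ε r) 0 := by
    unfold logKernel
    fun_prop (disch := exact hr')
  exact hcont.tendsto.mono_left nhdsWithin_le_nhds

theorem abs_logKernel_le_abs_log (hε : ε ∈ Ioc 0 1) (hr : r ≠ 0) :
    |logKernel ε r| ≤ |Real.log r| + |r| := by
  have hlow : Real.log r ≤ logKernel ε r := by
    rw [← logKernel_zero]
    unfold logKernel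
    have := hε.1
    gcongr
  have hsq : r ^ 2 + ε ^ 2 ≤ (1 + |r|) ^ 2 := by
    have hε' : ε ^ 2 ≤ 1 := pow_le_one₀ hε.1.le hε.2
    linarith [sq_abs r, abs_nonneg r, add_sq 1 |r|]
  have hup : logKernel ε r ≤ |r| := by
    calc logKernel ε r ≤ 1 / 2 * Real.log ((1 + |r|) ^ 2) := by unfold logKernel; gcongr
      _ = Real.log (1 + |r|) := by rw [Real.log_pow]; push_cast; ring
      _ ≤ |r| := by linarith [Real.log_le_sub_one_of_pos (show 0 < 1 + |r| by positivity)]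
  exact abs_le.2 ⟨by linarith [neg_abs_le (Real.log r), abs_nonneg r],
    by linarith [abs_nonneg (Real.log r)]⟩

theorem abs_log_le_indicator_add_abs (r : ℝ) :
    |Real.log r| ≤ (Ioc (-1 : ℝ) 1).indicator (fun r => |Real.log r|) r + |r| := by
  by_cases hr : r ∈ Ioc (-1 : ℝ) 1
  · rw [indicator_of_mem hr]
    linarith [abs_nonneg r]
  · rw [indicator_of_notMem hr, zero_add, ← Real.log_abs]
    have hone : 1 ≤ |r| := by
      by_contra! h
      exact hr ⟨(abs_lt.1 h).1, (abs_lt.1 h).2.le⟩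
    rw [abs_of_nonneg (Real.log_nonneg hone)]
    linarith [Real.log_le_sub_one_of_pos (show 0 < |r| by linarith)]

theorem integrable_prod_mul_of_integrable (hk : Integrable k) (hu : AEStronglyMeasurable u)
    (huC : ∀ x, ‖u x‖ ≤ C) (hv : Integrable v) :
    Integrable fun p : ℝ × ℝ => u p.1 * v p.2 * k (p.1 - p.2) := by
  simp only [mul_assoc]
  exact (hv.convolution_integrand (ContinuousLinearMap.mul ℝ ℝ) hk).bdd_mul (c := C)
    hu.comp_fst (.of_forall fun p => huC _)

theorem integrable_prod_mul_abs_sub (hu : Integrable u) (hu₁ : Integrable fun x => x * u x)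
    (hv : Integrable v) (hv₁ : Integrable fun x => x * v x) :
    Integrable fun p : ℝ × ℝ => u p.1 * v p.2 * |p.1 - p.2| :=
  integrable_prod_mul_of_abs_le_add_mul_abs (A := 0) measurable_id.abs zero_le_one
    (fun r => by simp) hu hu₁ hv hv₁

theorem integrable_prod_mul_log (hu : Integrable u) (hu₁ : Integrable fun x => x * u x)
    (huC : ∀ x, ‖u x‖ ≤ C) (hv : Integrable v) (hv₁ : Integrable fun x => x * v x) :
    Integrable fun p : ℝ × ℝ => u p.1 * v p.2 * Real.log (p.1 - p.2) := by
  have hk : Integrable ((Ioc (-1 : ℝ) 1).indicator fun r => |Real.log r|) :=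
    (integrable_indicator_iff measurableSet_Ioc).2
      (intervalIntegral.intervalIntegrable_log' (a := -1) (b := 1)).1.abs
  refine ((integrable_prod_mul_of_integrable hk hu.1 huC hv).abs.add
    (integrable_prod_mul_abs_sub hu hu₁ hv hv₁).abs).mono'
    ((hu.mul_prod hv).aestronglyMeasurable.mul
      (Real.measurable_log.comp (by fun_prop)).aestronglyMeasurable) (.of_forall fun p => ?_)
  have hnonneg : 0 ≤ (Ioc (-1 : ℝ) 1).indicator (fun r => |Real.log r|) (p.1 - p.2) :=
    indicator_nonneg (fun _ _ => abs_nonneg _) _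
  simp only [Pi.add_apply, Real.norm_eq_abs, abs_mul, abs_abs]
  rw [abs_of_nonneg hnonneg, ← mul_add]
  gcongr
  exact abs_log_le_indicator_add_abs _

theorem tendsto_logEnergy (hu : Integrable u) (hu₁ : Integrable fun x => x * u x)
    (huC : ∀ x, ‖u x‖ ≤ C) (hv : Integrable v) (hv₁ : Integrable fun x => x * v x) :
    Tendsto (fun ε => logEnergy ε u v) (𝓝[>] 0) (𝓝 (logEnergy 0 u v)) := by
  have hdom := (integrable_prod_mul_log hu hu₁ huC hv hv₁).abs.add
    (integrable_prod_mul_abs_sub hu hu₁ hv hv₁).abs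
  have hε : ∀ᶠ ε : ℝ in 𝓝[>] 0, ε ∈ Ioc 0 1 := Ioc_mem_nhdsGT zero_lt_one
  refine tendsto_integral_filter_of_dominated_convergence _ ?_ ?_ hdom ?_
  · filter_upwards [hε] with ε hε
    exact (hu.mul_prod hv).aestronglyMeasurable.mul
      ((continuous_logKernel hε.1).comp (by fun_prop)).aestronglyMeasurable
  · filter_upwards [hε] with ε hε
    filter_upwards [ae_fst_ne_snd] with p hp
    simp only [Pi.add_apply, Real.norm_eq_abs, abs_mul, abs_abs]
    rw [← mul_add]
    gcongr
    exact abs_logKernel_le_abs_log hε (sub_ne_zero.2 hp)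
  · filter_upwards [ae_fst_ne_snd] with p hp
    exact (tendsto_logKernel (sub_ne_zero.2 hp)).const_mul _

theorem lintegral_prod_withDensity_ofReal {g : ℝ × ℝ → ℝ} (hu : Measurable u)
    (hu₀ : ∀ x, 0 ≤ u x) (hg : Measurable g) :
    ∫⁻ p, ENNReal.ofReal (g p) ∂((volume.withDensity fun x => ENNReal.ofReal (u x)).prod
      (volume.withDensity fun x => ENNReal.ofReal (u x)))
      = ∫⁻ p : ℝ × ℝ, ENNReal.ofReal (u p.1 * u p.2 * g p) := by
  rw [prod_withDensity hu.ennreal_ofReal hu.ennreal_ofReal,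
    lintegral_withDensity_eq_lintegral_mul _ (by fun_prop) hg.ennreal_ofReal,
    Measure.volume_eq_prod]
  refine lintegral_congr fun p => ?_
  rw [Pi.mul_apply, ENNReal.ofReal_mul (mul_nonneg (hu₀ _) (hu₀ _)), ENNReal.ofReal_mul (hu₀ _)]

theorem freeEntropy_withDensity (hu : Measurable u) (hu₀ : ∀ x, 0 ≤ u x)
    (hint : Integrable fun p : ℝ × ℝ => u p.1 * u p.2 * Real.log (p.1 - p.2)) :
    freeEntropy (volume.withDensity fun x => ENNReal.ofReal (u x))
      = ((1 / 2 * logEnergy 0 u u : ℝ) : EReal) := by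
  have hneg : Integrable fun p : ℝ × ℝ => -(u p.1 * u p.2 * Real.log (p.1 - p.2)) := hint.neg
  simp only [freeEntropy, logEnergy, logKernel_zero, Real.log_abs]
  rw [lintegral_prod_withDensity_ofReal hu hu₀ (by fun_prop),
    lintegral_prod_withDensity_ofReal hu hu₀ (by fun_prop),
    integral_eq_lintegral_pos_part_sub_lintegral_neg_part hint, EReal.coe_mul, EReal.coe_sub,
    EReal.coe_ennreal_toReal hint.lintegral_lt_top.ne,
    EReal.coe_ennreal_toReal hneg.lintegral_lt_top.ne]
  simp only [mul_neg]

end FreeEntropy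

section Limit

variable {f : ℝ → ℝ} {K : ℝ≥0} {M ε : ℝ}

theorem interaction_regHilbert_self (hf : LipschitzWith K f) (hint : Integrable f) (hε : 0 < ε) :
    interaction (regHilbert ε f) f = ∫ x, regHilbert ε f x * f x * hilbert f x := by
  have hlip := lipschitzWith_regHilbert hε hint
  exact (integral_mul_hilbert hf hint hlip (hint.bdd_mul (c := ε⁻¹ * ∫ y, |f y|)
    hlip.continuous.aestronglyMeasurable (.of_forall (abs_regHilbert_le hε hint)))).symm

theorem norm_interaction_regHilbert_self_le (hf : LipschitzWith K f) (hint : Integrable f)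
    (hM : ∀ ε, 0 < ε → ∀ x, |regHilbert ε f x| ≤ M) (hε : 0 < ε) :
    ‖interaction (regHilbert ε f) f‖ ≤ M * M * ∫ x, |f x| := by
  have hH : ∀ x, |hilbert f x| ≤ M := fun x =>
    le_of_tendsto ((tendstoUniformly_regHilbert hf hint).tendsto_at x).abs
      (eventually_mem_nhdsWithin.mono fun ε hε => hM ε hε x)
  have hle : ∀ x, ‖regHilbert ε f x * f x * hilbert f x‖ ≤ M * M * |f x| := fun x => by
    rw [Real.norm_eq_abs, abs_mul, abs_mul, mul_right_comm]
    exact mul_le_mul_of_nonneg_right (mul_le_mul (hM ε hε x) (hH x) (abs_nonneg _)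
      ((abs_nonneg _).trans (hM ε hε x))) (abs_nonneg _)
  rw [interaction_regHilbert_self hf hint hε, ← integral_const_mul]
  exact norm_integral_le_of_norm_le (hint.abs.const_mul _) (.of_forall hle)

theorem tendsto_interaction_regHilbert_self (hf : LipschitzWith K f) (hint : Integrable f) :
    Tendsto (fun ε => interaction (regHilbert ε f) f) (𝓝[>] 0)
      (𝓝 (∫ x, hilbert f x ^ 2 * f x)) := by
  have hε : ∀ᶠ ε : ℝ in 𝓝[>] 0, 0 < ε := self_mem_nhdsWithin
  have hsq : ∀ x, hilbert f x ^ 2 * f x = hilbert f x * f x * hilbert f x := fun x => by ring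
  simp only [hsq]
  refine Tendsto.congr' (hε.mono fun ε hε => (interaction_regHilbert_self hf hint hε).symm)
    (tendsto_integral_filter_of_dominated_convergence
      (fun x => ((∫ y, |f y|) + 2 * K * Real.pi) * |f x| * ((∫ y, |f y|) + K * Real.pi)) ?_ ?_
      ((hint.abs.const_mul _).mul_const _) (.of_forall fun x =>
        (((tendstoUniformly_regHilbert hf hint).tendsto_at x).mul_const _).mul_const _))
  · filter_upwards [hε] with ε hε
    exact (((lipschitzWith_regHilbert hε hint).continuous.mul hf.continuous).mul
      (continuous_hilbert hf hint)).aestronglyMeasurable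
  · filter_upwards [hε] with ε hε
    refine .of_forall fun x => ?_
    rw [norm_mul, norm_mul]
    gcongr
    · exact abs_regHilbert_le_of_lipschitzWith hf hint hε x
    · exact le_rfl
    · exact abs_hilbert_le hf hint x

end Limit

namespace IsDensityFlow

variable {ρ : ℝ → ℝ → ℝ}

theorem tendsto_logEnergy (hρ : IsDensityFlow ρ) (hlip : ∀ t, ∃ K, LipschitzWith K (ρ t)) (t : ℝ) :
    Tendsto (fun ε => logEnergy ε (ρ t) (ρ t)) (𝓝[>] 0) (𝓝 (logEnergy 0 (ρ t) (ρ t))) := by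
  obtain ⟨K, hK⟩ := hlip t
  exact DysonFlow.tendsto_logEnergy (hρ.integrable t) (hρ.integrable_id_mul t)
    (abs_le_of_lipschitzWith hK (hρ.integrable t)) (hρ.integrable t) (hρ.integrable_id_mul t)

theorem freeEntropy_densMeasure (hρ : IsDensityFlow ρ) (hlip : ∀ t, ∃ K, LipschitzWith K (ρ t))
    (t : ℝ) : freeEntropy (densMeasure ρ t) = ((1 / 2 * logEnergy 0 (ρ t) (ρ t) : ℝ) : EReal) := by
  obtain ⟨K, hK⟩ := hlip t
  refine freeEntropy_withDensity hK.continuous.measurable (hρ.nonneg t) ?_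
  exact integrable_prod_mul_log (hρ.integrable t) (hρ.integrable_id_mul t)
    (abs_le_of_lipschitzWith hK (hρ.integrable t)) (hρ.integrable t) (hρ.integrable_id_mul t)

end IsDensityFlow

namespace IsWeakSolution

variable {ρ : ℝ → ℝ → ℝ}

theorem tendsto_integral_interaction_regHilbert (hρ : IsWeakSolution ρ)
    (hlip : ∀ t, ∃ K, LipschitzWith K (ρ t)) {a b : ℝ} (ha : 0 ≤ a) (hb : 0 ≤ b) :
    Tendsto (fun ε => ∫ s in a..b, interaction (regHilbert ε (ρ s)) (ρ s)) (𝓝[>] 0)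
      (𝓝 (∫ s in a..b, ∫ x, hilbert (ρ s) x ^ 2 * ρ s x)) := by
  choose K hK using hlip
  obtain ⟨M, hM⟩ := hρ.exists_abs_regHilbert_le (hK 0)
  have hε : ∀ᶠ ε : ℝ in 𝓝[>] 0, 0 < ε := self_mem_nhdsWithin
  refine intervalIntegral.tendsto_integral_filter_of_dominated_convergence (fun _ => M * M) ?_ ?_
    intervalIntegrable_const (.of_forall fun s _ =>
      tendsto_interaction_regHilbert_self (hK s) (hρ.integrable s))
  · filter_upwards [hε] with ε hε
    exact ((hρ.continuous_uncurry_interaction_regHilbert hε).comp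
      (by fun_prop : Continuous fun s : ℝ => (s, s))).aestronglyMeasurable
  · filter_upwards [hε] with ε hε
    refine .of_forall fun s hs => ?_
    have hs₀ : 0 ≤ s := (le_min ha hb).trans hs.1.le
    have hle := norm_interaction_regHilbert_self_le (hK s) (hρ.integrable s)
      (fun ε hε => hM ε hε s hs₀) hε
    rwa [hρ.integral_abs, mul_one] at hle

theorem logEnergy_zero_sub_eq_two_mul_integral (hρ : IsWeakSolution ρ)
    (hlip : ∀ t, ∃ K, LipschitzWith K (ρ t)) {a b : ℝ} (ha : 0 ≤ a) (hb : 0 ≤ b) :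
    logEnergy 0 (ρ b) (ρ b) - logEnergy 0 (ρ a) (ρ a)
      = 2 * ∫ s in a..b, ∫ x, hilbert (ρ s) x ^ 2 * ρ s x := by
  refine tendsto_nhds_unique (((hρ.tendsto_logEnergy hlip b).sub
    (hρ.tendsto_logEnergy hlip a)).congr' ?_)
    ((hρ.tendsto_integral_interaction_regHilbert hlip ha hb).const_mul 2)
  filter_upwards [self_mem_nhdsWithin] with ε hε
  exact hρ.logEnergy_sub_eq_two_mul_integral hε ha hb

theorem freeEntropy_eq_add_integral (hρ : IsWeakSolution ρ) (hlip : ∀ t, ∃ K, LipschitzWith K (ρ t))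
    {a b : ℝ} (ha : 0 ≤ a) (hb : 0 ≤ b) :
    freeEntropy (densMeasure ρ b) = freeEntropy (densMeasure ρ a)
      + ((∫ s in a..b, ∫ x, hilbert (ρ s) x ^ 2 * ρ s x : ℝ) : EReal) := by
  rw [hρ.freeEntropy_densMeasure hlip, hρ.freeEntropy_densMeasure hlip, ← EReal.coe_add,
    EReal.coe_eq_coe_iff]
  linarith [hρ.logEnergy_zero_sub_eq_two_mul_integral hlip ha hb]

end IsWeakSolution

section RegularDensity

variable {f : ℝ → ℝ}

/-- A `C^{1,1}` probability density with finite first moment and integrable derivative. These are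
the properties of a Schwartz density under which its Hilbert transform is differentiable and its
free entropy is finite. -/
structure IsRegularDensity (f : ℝ → ℝ) : Prop where
  nonneg : ∀ x, 0 ≤ f x
  integral_eq_one : ∫ x, f x = 1
  integrable_id_mul : Integrable fun x => x * f x
  differentiable : Differentiable ℝ f
  integrable_deriv : Integrable (deriv f)
  exists_lipschitzWith_deriv : ∃ K, LipschitzWith K (deriv f)

theorem IsRegularDensity.integrable (hf : IsRegularDensity f) : Integrable f :=
  .of_integral_ne_zero (by rw [hf.integral_eq_one]; exact one_ne_zero)

theorem IsRegularDensity.exists_lipschitzWith (hf : IsRegularDensity f) :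
    ∃ K, LipschitzWith K f := by
  obtain ⟨K', hK'⟩ := hf.exists_lipschitzWith_deriv
  exact ⟨_, lipschitzWith_of_hasDerivAt_of_norm_le (fun x => (hf.differentiable x).hasDerivAt)
    fun x => (abs_le_of_lipschitzWith hK' hf.integrable_deriv x).trans (Real.le_coe_toNNReal _)⟩

theorem isRegularDensity_of_eq_schwartzMap (hF : ∃ F : SchwartzMap ℝ ℝ, ∀ x, F x = f x)
    (hf : ∀ x, 0 ≤ f x) (hint : ∫ x, f x = 1) : IsRegularDensity f := by
  obtain ⟨F, hF⟩ := hF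
  obtain rfl : ⇑F = f := funext hF
  have hderiv : ∀ G : SchwartzMap ℝ ℝ, deriv G = SchwartzMap.derivCLM ℝ ℝ G := fun G =>
    funext fun x => (SchwartzMap.derivCLM_apply ℝ G x).symm
  have hbdd : ∀ G : SchwartzMap ℝ ℝ, ∃ K : ℝ≥0, ∀ x, ‖G x‖ ≤ K := fun G => by
    obtain ⟨C, -, hC⟩ := G.decay 0 0
    exact ⟨C.toNNReal, fun x => le_trans (by simpa using hC x) (Real.le_coe_toNNReal C)⟩
  obtain ⟨K, hK⟩ := hbdd (SchwartzMap.derivCLM ℝ ℝ (SchwartzMap.derivCLM ℝ ℝ F))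
  refine ⟨hf, hint, ?_, F.differentiable, ?_, K, ?_⟩
  · refine (F.integrable_pow_mul volume 1).mono' (by fun_prop) (.of_forall fun x => ?_)
    rw [norm_mul, pow_one]
  · rw [hderiv]
    exact SchwartzMap.integrable _
  · rw [hderiv]
    exact lipschitzWith_of_hasDerivAt_of_norm_le (SchwartzMap.hasDerivAt _) hK

end RegularDensity

section ClassicalSolution

theorem tendsto_integral_abs_sub_of_tendsto {α ι : Type*} [MeasurableSpace α] {μ : Measure α}
    {l : Filter ι} [l.IsCountablyGenerated] {u : ι → α → ℝ} {v : α → ℝ}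
    (hu : ∀ i, Integrable (u i) μ) (hv : Integrable v μ) (hu₀ : ∀ i x, 0 ≤ u i x)
    (huv : ∀ i, ∫ x, u i x ∂μ = ∫ x, v x ∂μ) (hlim : ∀ x, Tendsto (fun i => u i x) l (𝓝 (v x))) :
    Tendsto (fun i => ∫ x, |u i x - v x| ∂μ) l (𝓝 0) := by
  have hpos : ∀ i, Integrable (fun x => max (v x - u i x) 0) μ := fun i => (hv.sub (hu i)).pos_part
  have habs : ∀ i, ∫ x, |u i x - v x| ∂μ = 2 * ∫ x, max (v x - u i x) 0 ∂μ := fun i => by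
    have hpw : ∀ x, |u i x - v x| = u i x - v x + 2 * max (v x - u i x) 0 := fun x => by
      rcases le_total (u i x) (v x) with h | h
      · rw [abs_of_nonpos (by linarith), max_eq_left (by linarith)]
        ring
      · rw [abs_of_nonneg (by linarith), max_eq_right (by linarith)]
        ring
    simp only [hpw]
    rw [integral_add (by exact (hu i).sub hv) ((hpos i).const_mul 2), integral_sub (hu i) hv, huv,
      sub_self, zero_add, integral_const_mul]
  have hlim₀ : Tendsto (fun i => ∫ x, max (v x - u i x) 0 ∂μ) l (𝓝 (∫ _, 0 ∂μ)) := by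
    refine tendsto_integral_filter_of_dominated_convergence (fun x => |v x|)
      (.of_forall fun i => (hpos i).aestronglyMeasurable)
      (.of_forall fun i => .of_forall fun x => ?_) hv.abs (.of_forall fun x => ?_)
    · rw [Real.norm_eq_abs, abs_of_nonneg (le_max_right _ _)]
      exact max_le (by linarith [hu₀ i x, le_abs_self (v x)]) (abs_nonneg _)
    · simpa using ((hlim x).const_sub (v x)).max (tendsto_const_nhds (x := (0 : ℝ)))
  simpa [habs] using hlim₀.const_mul 2

variable {m : ℝ → ℝ → ℝ}

theorem hasDerivAt_of_contDiffOn_uncurry {I : Set ℝ} (hI : IsOpen I)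
    (hm : ContDiffOn ℝ 1 (Function.uncurry m) (I ×ˢ univ)) {t : ℝ} (ht : t ∈ I) (x : ℝ) :
    HasDerivAt (fun s => m s x) (fderiv ℝ (Function.uncurry m) (t, x) (1, 0)) t :=
  ((hm.contDiffAt ((hI.prod isOpen_univ).mem_nhds ⟨ht, mem_univ x⟩)).differentiableAt
    one_ne_zero).hasFDerivAt.comp_hasDerivAt t ((hasDerivAt_id t).prodMk (hasDerivAt_const t x))

theorem continuousOn_deriv_of_contDiffOn_uncurry {I : Set ℝ} (hI : IsOpen I)
    (hm : ContDiffOn ℝ 1 (Function.uncurry m) (I ×ˢ univ)) :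
    ContinuousOn (fun p : ℝ × ℝ => deriv (fun s => m s p.2) p.1) (I ×ˢ univ) :=
  ((hm.continuousOn_fderiv_of_isOpen (hI.prod isOpen_univ) le_rfl).clm_apply
    continuousOn_const).congr fun p hp => (hasDerivAt_of_contDiffOn_uncurry hI hm hp.1 p.2).deriv

theorem hasDerivAt_integral_mul_of_contDiffOn {I : Set ℝ} (hI : IsOpen I)
    (hm : ContDiffOn ℝ 1 (Function.uncurry m) (I ×ˢ univ)) {φ : ℝ → ℝ} (hφ : Continuous φ)
    (hφ_supp : HasCompactSupport φ) {t : ℝ} (ht : t ∈ I) :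
    HasDerivAt (fun s => ∫ x, m s x * φ x) (∫ x, deriv (fun s => m s x) t * φ x) t := by
  obtain ⟨J, hJ, hJt, hJI⟩ := exists_compact_subset hI ht
  have hderiv := continuousOn_deriv_of_contDiffOn_uncurry hI hm
  have hcont : ∀ s ∈ I, Continuous fun x => m s x * φ x := fun s hs =>
    (hm.continuousOn.comp_continuous (f := fun x => (s, x)) (by fun_prop)
      fun x => ⟨hs, mem_univ x⟩).mul hφ
  have hcont' : Continuous fun x => deriv (fun s => m s x) t * φ x :=
    (hderiv.comp_continuous (f := fun x => (t, x)) (by fun_prop) fun x => ⟨ht, mem_univ x⟩).mul hφ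
  obtain ⟨C, hC⟩ := (hJ.prod hφ_supp).exists_bound_of_continuousOn
    (hderiv.mono (Set.prod_mono hJI (subset_univ _)))
  refine (hasDerivAt_integral_of_dominated_loc_of_deriv_le
    (F := fun s x => m s x * φ x) (F' := fun s x => deriv (fun r => m r x) s * φ x)
    (bound := fun x => C * ‖φ x‖) (mem_interior_iff_mem_nhds.1 hJt)
    (eventually_of_mem (hI.mem_nhds ht) fun s hs => (hcont s hs).aestronglyMeasurable)
    ((hcont t ht).integrable_of_hasCompactSupport hφ_supp.mul_left) hcont'.aestronglyMeasurable
    (.of_forall fun x s hs => ?_)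
    ((hφ.integrable_of_hasCompactSupport hφ_supp).norm.const_mul C)
    (.of_forall fun x s hs => ?_)).2
  · rw [norm_mul]
    by_cases hx : x ∈ tsupport φ
    · exact mul_le_mul_of_nonneg_right (hC (s, x) ⟨hs, hx⟩) (norm_nonneg _)
    · simp only [image_eq_zero_of_notMem_tsupport hx, norm_zero, mul_zero, le_refl]
  · have hdiff := (hasDerivAt_of_contDiffOn_uncurry hI hm (hJI hs) x).differentiableAt
    exact hdiff.hasDerivAt.mul_const _

theorem integral_deriv_mul_eq_interaction {t : ℝ} (hreg : IsRegularDensity (m t))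
    (hpde : ∀ x, deriv (fun s => m s x) t + deriv (fun y => m t y * hilbert (m t) y) x = 0)
    {φ ψ : ℝ → ℝ} {L : ℝ≥0} (hφ_supp : HasCompactSupport φ) (hφψ : ∀ x, HasDerivAt φ (ψ x) x)
    (hψ : LipschitzWith L ψ) :
    ∫ x, deriv (fun s => m s x) t * φ x = interaction ψ (m t) := by
  obtain ⟨K, hK⟩ := hreg.exists_lipschitzWith
  obtain ⟨K', hK'⟩ := hreg.exists_lipschitzWith_deriv
  rw [← neg_neg (interaction ψ (m t)), ← integral_mul_deriv_mul_hilbert hK hreg.integrable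
    hreg.differentiable hK' hreg.integrable_deriv hφ_supp hφψ hψ, ← integral_neg]
  refine integral_congr_ae (.of_forall fun x => ?_)
  simp only
  rw [eq_neg_of_add_eq_zero_left (hpde x)]
  ring

theorem isDensityFlow_comp_max (hreg : ∀ t, 0 ≤ t → IsRegularDensity (m t))
    (hcont : ∀ x, ContinuousOn (fun t => m t x) (Ici 0)) :
    IsDensityFlow fun t => m (max t 0) := by
  have hreg' : ∀ t : ℝ, IsRegularDensity (m (max t 0)) := fun t => hreg _ (le_max_right t 0)
  have hcont' : ∀ x, Continuous fun t : ℝ => m (max t 0) x := fun x =>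
    (hcont x).comp_continuous (by fun_prop) fun t => le_max_right t 0
  exact ⟨fun t => (hreg' t).nonneg, fun t => (hreg' t).integral_eq_one,
    fun t => (hreg' t).integrable_id_mul, fun t => tendsto_integral_abs_sub_of_tendsto
      (fun s => (hreg' s).integrable) (hreg' t).integrable (fun s => (hreg' s).nonneg)
      (fun s => by rw [(hreg' s).integral_eq_one, (hreg' t).integral_eq_one])
      fun x => (hcont' x).tendsto t⟩

theorem isWeakSolution_comp_max (hreg : ∀ t, 0 ≤ t → IsRegularDensity (m t))
    (hcont : ∀ x, ContinuousOn (fun t => m t x) (Ici 0))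
    (hm : ContDiffOn ℝ 1 (Function.uncurry m) (Ioi 0 ×ˢ univ))
    (hpde : ∀ t x, 0 < t →
      deriv (fun s => m s x) t + deriv (fun y => m t y * hilbert (m t) y) x = 0) :
    IsWeakSolution fun t => m (max t 0) := by
  have hflow := isDensityFlow_comp_max hreg hcont
  refine ⟨hflow, fun φ ψ L hφ_supp hφψ hψ a b ha hb => ?_⟩
  have hφ : Continuous φ := continuous_iff_continuousAt.2 fun x => (hφψ x).continuousAt
  obtain ⟨B, hB⟩ := hφ_supp.exists_bound_of_continuous hφ
  refine (intervalIntegral.integral_eq_sub_of_hasDeriv_right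
    (f := fun t => ∫ x, m (max t 0) x * φ x) (hflow.continuous_integral_smul hφ hB).continuousOn
    (fun t ht => ?_) ((hflow.continuous_interaction hψ).intervalIntegrable _ _)).symm
  have ht₀ : 0 < t := (le_min ha hb).trans_lt ht.1
  have hderiv := hasDerivAt_integral_mul_of_contDiffOn isOpen_Ioi hm hφ hφ_supp ht₀
  rw [integral_deriv_mul_eq_interaction (hreg t ht₀.le) (fun x => hpde t x ht₀) hφ_supp hφψ hψ]
    at hderiv
  simp only [max_eq_left ht₀.le]
  refine (hderiv.congr_of_eventuallyEq ?_).hasDerivWithinAt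
  filter_upwards [Ioi_mem_nhds ht₀] with s hs
  rw [max_eq_left (le_of_lt hs)]

end ClassicalSolution

end DysonFlow

theorem freeEntropy_dyson_identity_general (m : ℝ → ℝ → ℝ)
    (hcont : ∀ x, ContinuousOn (fun t => m t x) (Ici 0))
    (hC1 : ContDiffOn ℝ 1 (Function.uncurry m) (Ioi 0 ×ˢ univ))
    (hreg : ∀ t, 0 ≤ t → DysonFlow.IsRegularDensity (m t))
    (hpde : ∀ t x, 0 < t →
      deriv (fun s => m s x) t + deriv (fun y => m t y * hilbert (m t) y) x = 0) :
    (∀ t' t : ℝ, 0 ≤ t' → t' ≤ t →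
      freeEntropy (densMeasure m t)
        = freeEntropy (densMeasure m t')
          + ((∫ s in t'..t, ∫ x, (hilbert (m s) x) ^ 2 * m s x : ℝ) : EReal)) ∧
    (∀ t' t : ℝ, 0 ≤ t' → t' ≤ t →
      freeEntropy (densMeasure m t') ≤ freeEntropy (densMeasure m t)) := by
  have hweak := DysonFlow.isWeakSolution_comp_max hreg hcont hC1 hpde
  have hdens : ∀ t, 0 ≤ t → densMeasure (fun s => m (max s 0)) t = densMeasure m t :=
    fun t ht => by simp only [densMeasure, max_eq_left ht]
  have identity : ∀ t' t : ℝ, 0 ≤ t' → t' ≤ t → freeEntropy (densMeasure m t)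
      = freeEntropy (densMeasure m t')
        + ((∫ s in t'..t, ∫ x, (hilbert (m s) x) ^ 2 * m s x : ℝ) : EReal) := by
    intro t' t ht' htt'
    have ht := ht'.trans htt'
    rw [← hdens t ht, ← hdens t' ht', hweak.freeEntropy_eq_add_integral
      (fun s => (hreg _ (le_max_right s 0)).exists_lipschitzWith) ht' ht]
    congr 2
    refine intervalIntegral.integral_congr fun s hs => ?_
    rw [uIcc_of_le htt'] at hs
    simp only [max_eq_left (ht'.trans hs.1)]
  refine ⟨identity, fun t' t ht' htt' => ?_⟩
  rw [identity t' t ht' htt']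
  refine le_add_of_nonneg_right (EReal.coe_nonneg.2 (intervalIntegral.integral_nonneg htt'
    fun s hs => integral_nonneg fun x => ?_))
  exact mul_nonneg (sq_nonneg _) ((hreg s (ht'.trans hs.1)).nonneg x)

/-- **Evolution of the free entropy along the Dyson flow.**
If `m` is a smooth solution of `∂ₜm + ∂ₓ(m H[m]) = 0`, with `m(t,·)` a Schwartz probability
density for each `t ≥ 0`, then `E(m_t) = E(m_{t'}) + ∫_{t'}^t ∫ H[m_s]² m_s dx ds` for all
`0 ≤ t' ≤ t`; in particular `s ↦ E(m_s)` is non-decreasing. -/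
theorem freeEntropy_dyson_identity (m : ℝ → ℝ → ℝ)
    (hsmooth : ContDiffOn ℝ (⊤ : ℕ∞) (Function.uncurry m) (Ici 0 ×ˢ univ))
    (hschwartz : ∀ t, 0 ≤ t → ∃ f : SchwartzMap ℝ ℝ, ∀ x, f x = m t x)
    (hnonneg : ∀ t x, 0 ≤ t → 0 ≤ m t x)
    (hprob : ∀ t, 0 ≤ t → ∫ x, m t x = 1)
    (hpde : ∀ t x, 0 < t →
      deriv (fun s => m s x) t + deriv (fun y => m t y * hilbert (m t) y) x = 0) :
    (∀ t' t : ℝ, 0 ≤ t' → t' ≤ t →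
      freeEntropy (densMeasure m t)
        = freeEntropy (densMeasure m t')
          + ((∫ s in t'..t, ∫ x, (hilbert (m s) x) ^ 2 * m s x : ℝ) : EReal)) ∧
    (∀ t' t : ℝ, 0 ≤ t' → t' ≤ t →
      freeEntropy (densMeasure m t') ≤ freeEntropy (densMeasure m t)) :=
  freeEntropy_dyson_identity_general m (fun x => hsmooth.continuousOn.uncurry_right x (mem_univ x))
    ((hsmooth.mono (prod_mono_left Ioi_subset_Ici_self)).of_le (by simp)) (fun t ht =>
      DysonFlow.isRegularDensity_of_eq_schwartzMap (hschwartz t ht) (hnonneg t · ht) (hprob t ht))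
    hpde
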